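/- Let K belong to the class R and let t and t₁ be the two singular vertices of K. If d(t) = 7, then tt₁ is an edge of K with d(tt₁) = 6 and d(t₁) ≥ 8; otherwise d(t) ≥ 8 and d(t₁) ≥ 8. -/

import Mathlib

/-- An abstract simplicial complex on vertex set `ℕ`: a finite, downward closed
collection of nonempty finite sets of vertices. -/
structure SComplex where
  faces : Finset (Finset ℕ)
  not_empty_mem : ∅ ∉ faces
  down_closed : ∀ s ∈ faces, ∀ t ⊆ s, t ≠ ∅ → t ∈ faces

namespace SComplex

/-- The set of vertices of the complex. -/
def vertexSet (K : SComplex) : Finset ℕ := K.faces.sup id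

/-- `fnum K i` is the number of `i`-dimensional faces of `K`. -/
def fnum (K : SComplex) (i : ℕ) : ℕ := (K.faces.filter fun s => s.card = i + 1).card

/-- `g₂` for a 3-dimensional complex: `f₁ - 4 f₀ + 10`. -/
def g2 (K : SComplex) : ℤ := (K.fnum 1 : ℤ) - 4 * (K.fnum 0 : ℤ) + 10

/-- `g₂` for a 2-dimensional complex: `f₁ - 3 f₀ + 6`. -/
def g2surf (K : SComplex) : ℤ := (K.fnum 1 : ℤ) - 3 * (K.fnum 0 : ℤ) + 6

/-- Euler characteristic of a (2-dimensional) complex. -/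
def euler (K : SComplex) : ℤ := (K.fnum 0 : ℤ) - (K.fnum 1 : ℤ) + (K.fnum 2 : ℤ)

/-- The link of a face `σ`. -/
def lk (K : SComplex) (σ : Finset ℕ) : SComplex where
  faces := K.faces.filter fun γ => γ ∩ σ = ∅ ∧ γ ∪ σ ∈ K.faces
  not_empty_mem := fun h => K.not_empty_mem (Finset.mem_filter.mp h).1
  down_closed := by
    intro s hs t hts ht
    rw [Finset.mem_filter] at hs ⊢
    refine ⟨K.down_closed s hs.1 t hts ht, ?_, ?_⟩
    · have h1 : t ∩ σ ⊆ s ∩ σ := Finset.inter_subset_inter hts (Finset.Subset.refl σ)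
      rw [hs.2.1] at h1
      exact Finset.subset_empty.mp h1
    · refine K.down_closed (s ∪ σ) hs.2.2 (t ∪ σ)
        (Finset.union_subset_union hts (Finset.Subset.refl σ)) ?_
      intro hc
      exact ht (Finset.union_eq_empty.mp hc).1

/-- The (closed) star of a face `σ`. -/
def st (K : SComplex) (σ : Finset ℕ) : SComplex where
  faces := K.faces.filter fun α => α ∪ σ ∈ K.faces
  not_empty_mem := fun h => K.not_empty_mem (Finset.mem_filter.mp h).1
  down_closed := by
    intro s hs t hts ht
    rw [Finset.mem_filter] at hs ⊢
    refine ⟨K.down_closed s hs.1 t hts ht, ?_⟩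
    refine K.down_closed (s ∪ σ) hs.2 (t ∪ σ)
      (Finset.union_subset_union hts (Finset.Subset.refl σ)) ?_
    intro hc
    exact ht (Finset.union_eq_empty.mp hc).1

/-- A facet is a maximal face. -/
def IsFacet (K : SComplex) (s : Finset ℕ) : Prop :=
  s ∈ K.faces ∧ ∀ t ∈ K.faces, s ⊆ t → s = t

/-- A pure `d`-dimensional complex: all facets have `d+1` vertices. -/
def IsPure (K : SComplex) (d : ℕ) : Prop :=
  K.faces.Nonempty ∧ ∀ s, K.IsFacet s → s.card = d + 1

/-- Two facets are adjacent if they share a codimension-one face. -/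
def FacetAdj (K : SComplex) (s t : Finset ℕ) : Prop :=
  K.IsFacet s ∧ K.IsFacet t ∧ (s ∩ t).card + 1 = s.card

/-- Strong connectedness: any two facets are joined by a chain of facets, consecutive
ones sharing a codimension-one face. -/
def StronglyConnected (K : SComplex) : Prop :=
  ∀ s t, K.IsFacet s → K.IsFacet t → Relation.ReflTransGen K.FacetAdj s t

/-- Two vertices are adjacent if they span an edge. -/
def VertAdj (K : SComplex) (u v : ℕ) : Prop := ({u, v} : Finset ℕ) ∈ K.faces

/-- Connectedness of a complex (via its 1-skeleton). -/
def Conn (K : SComplex) : Prop :=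
  K.faces.Nonempty ∧
    ∀ u v, {u} ∈ K.faces → {v} ∈ K.faces → Relation.ReflTransGen K.VertAdj u v

/-- A normal `d`-pseudomanifold: pure, strongly connected, every `(d-1)`-face is in
exactly two facets, and links of faces of dimension at most `d-2` are connected. -/
def IsNormalPseudomanifold (K : SComplex) (d : ℕ) : Prop :=
  K.IsPure d ∧ K.StronglyConnected ∧
    (∀ s ∈ K.faces, s.card = d →
      (K.faces.filter fun F => F.card = d + 1 ∧ s ⊆ F).card = 2) ∧
    (∀ s ∈ K.faces, s.card ≤ d - 1 → (K.lk s).Conn)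

/-- The geometric realization `|K|`, as a subspace of `ℕ → ℝ`. -/
def realSpace (K : SComplex) : Set (ℕ → ℝ) :=
  {w | (∀ v, 0 ≤ w v) ∧ ∃ s ∈ K.faces, (∀ v, w v ≠ 0 → v ∈ s) ∧ ∑ v ∈ s, w v = 1}

/-- The link of the vertex `v` triangulates the `(d-1)`-sphere. -/
def HasSphereLink (K : SComplex) (d : ℕ) (v : ℕ) : Prop :=
  Nonempty (↥((K.lk {v}).realSpace) ≃ₜ
    ↥(Metric.sphere (0 : EuclideanSpace ℝ (Fin d)) 1))

/-- A singular vertex of a normal 3-pseudomanifold: its link is not a 2-sphere. -/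
def IsSingular (K : SComplex) (v : ℕ) : Prop :=
  {v} ∈ K.faces ∧ ¬ K.HasSphereLink 3 v

/-- `d(σ)`: the number of vertices of the link of `σ`. -/
def deg (K : SComplex) (σ : Finset ℕ) : ℕ := (K.lk σ).fnum 0

/-- The boundary complex of the simplex on vertex set `s`: all nonempty proper subsets. -/
def properFaces (s : Finset ℕ) : Finset (Finset ℕ) :=
  s.powerset.filter fun t => t ≠ ∅ ∧ t ≠ s

/-- All nonempty faces of the simplex on vertex set `s`. -/
def simplexFaces (s : Finset ℕ) : Finset (Finset ℕ) :=
  s.powerset.filter fun t => t ≠ ∅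

/-- Operation (A): a bistellar 2-move on an edge `uv` with `lk(uv) = ∂(abc)`, `abc ∉ K`. -/
def BistellarTwoMove (K K' : SComplex) : Prop :=
  ∃ u v a b c : ℕ,
    ({u, v} : Finset ℕ) ∈ K.faces ∧ u ≠ v ∧
    ({a, b, c} : Finset ℕ).card = 3 ∧
    u ∉ ({a, b, c} : Finset ℕ) ∧ v ∉ ({a, b, c} : Finset ℕ) ∧
    (K.lk {u, v}).faces = properFaces {a, b, c} ∧
    ({a, b, c} : Finset ℕ) ∉ K.faces ∧
    K'.faces = ((K.faces.filter fun α => ¬ ({u, v} : Finset ℕ) ⊆ α) ∪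
      simplexFaces (insert u {a, b, c})) ∪ simplexFaces (insert v {a, b, c})

/-- The faces of the boundary complex of a pure `d`-dimensional complex with face set `F`:
faces contained in some `(d-1)`-face lying in exactly one facet. -/
def bdryFaces (F : Finset (Finset ℕ)) (d : ℕ) : Finset (Finset ℕ) :=
  F.filter fun s => ∃ r ∈ F, s ⊆ r ∧ r.card = d ∧
    (F.filter fun t => t.card = d + 1 ∧ r ⊆ t).card = 1

/-- The faces of the cone with apex `w` over the complex with face set `F`. -/
def coneFaces (w : ℕ) (F : Finset (Finset ℕ)) : Finset (Finset ℕ) :=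
  (F ∪ F.image (insert w)) ∪ {{w}}

/-- `K₁` is obtained from the normal `d`-pseudomanifold `K` by contracting the
edge `uv` (satisfying the link condition): delete all faces containing `u` or `v`
and cone off the boundary of the result with a new vertex `w`. -/
def EdgeContractionAt (d : ℕ) (K : SComplex) (u v : ℕ) (K₁ : SComplex) : Prop :=
  ({u, v} : Finset ℕ) ∈ K.faces ∧ u ≠ v ∧
  (K.lk {u}).faces ∩ (K.lk {v}).faces = (K.lk {u, v}).faces ∧
  ∃ w, w ∉ K.vertexSet ∧
    K₁.faces = (K.faces.filter fun α => u ∉ α ∧ v ∉ α) ∪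
      coneFaces w (bdryFaces (K.faces.filter fun α => u ∉ α ∧ v ∉ α) d)

/-- Operation (B): an edge contraction in a 3-dimensional complex. -/
def EdgeContraction (K K₁ : SComplex) : Prop := ∃ u v, EdgeContractionAt 3 K u v K₁

/-- The class `R`: normal 3-pseudomanifolds with one or two singular vertices such that
(i) if `K` contains the boundary of a 3-simplex then it contains the 3-simplex and
(ii) no normal 3-pseudomanifold with smaller `g₂` is obtained from `K` by a
bistellar 2-move, an edge contraction, an edge expansion followed by a bistellar
2-move, or an edge expansion followed by an edge contraction. -/
def InClassR (K : SComplex) : Prop :=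
  K.IsNormalPseudomanifold 3 ∧
  1 ≤ {v | K.IsSingular v}.ncard ∧ {v | K.IsSingular v}.ncard ≤ 2 ∧
  (∀ s : Finset ℕ, s.card = 4 → (∀ t ∈ properFaces s, t ∈ K.faces) → s ∈ K.faces) ∧
  (∀ K' : SComplex, K'.IsNormalPseudomanifold 3 →
    (BistellarTwoMove K K' ∨ EdgeContraction K K' ∨
      (∃ M, EdgeContraction M K ∧ BistellarTwoMove M K') ∨
      (∃ M, EdgeContraction M K ∧ EdgeContraction M K')) →
    K.g2 ≤ K'.g2)

/-!
Let `t` be a singular vertex with at most seven neighbours. If an edge `ta` has degree 3, then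
either the triangle bounded by its link is missing and a bistellar 2-move lowers `g₂`, or the link
of `t` is the boundary of a tetrahedron. If `a` is adjacent in the link of `t` to all other vertices
of that link, then, as there are no missing tetrahedra, the edge `ta` satisfies the link condition
and contracting it lowers `g₂`. So in the link of `t`, a surface with at most seven vertices, every
vertex has degree at least 4 and misses another vertex. Hence all degrees are 4 or 5, and such a
surface is the suspension of a polygon. It is then a sphere, contradicting the singularity of `t`.
-/

open Relation

section Links

variable {K : SComplex} {s t e : Finset ℕ} {d v x y z : ℕ}

theorem mem_of_subset (hs : s ∈ K.faces) (hts : t ⊆ s) (ht : t.Nonempty) : t ∈ K.faces :=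
  K.down_closed s hs t hts ht.ne_empty

theorem nonempty_of_mem (hs : s ∈ K.faces) : s.Nonempty :=
  Finset.nonempty_iff_ne_empty.2 fun h => K.not_empty_mem (h ▸ hs)

theorem mem_vertexSet_of_mem (hs : s ∈ K.faces) (hx : x ∈ s) : x ∈ K.vertexSet :=
  Finset.mem_sup.2 ⟨s, hs, hx⟩

theorem mem_properFaces {s t : Finset ℕ} : t ∈ properFaces s ↔ t.Nonempty ∧ t ⊂ s := by
  simp only [properFaces, Finset.mem_filter, Finset.mem_powerset, Finset.ssubset_iff_subset_ne,
    Finset.nonempty_iff_ne_empty]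
  tauto

theorem mem_lk : t ∈ (K.lk s).faces ↔ t.Nonempty ∧ Disjoint t s ∧ t ∪ s ∈ K.faces := by
  simp only [lk, Finset.mem_filter, Finset.disjoint_iff_inter_eq_empty]
  exact ⟨fun h => ⟨nonempty_of_mem h.1, h.2⟩,
    fun h => ⟨mem_of_subset h.2.2 Finset.subset_union_left h.1, h.2⟩⟩

/-- `K.LinkVertex s y`: `y` is a vertex of the link of `s`. The face `s` may be empty, in which
case the link is the whole complex. -/
def LinkVertex (K : SComplex) (s : Finset ℕ) (y : ℕ) : Prop := y ∉ s ∧ insert y s ∈ K.faces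

/-- `K.LinkAdj s y z`: the vertices `y` and `z` of the link of `s` are equal or span an edge of
that link. -/
def LinkAdj (K : SComplex) (s : Finset ℕ) (y z : ℕ) : Prop :=
  y ∉ s ∧ z ∉ s ∧ insert y (insert z s) ∈ K.faces

/-- The link of the possibly empty face `s` has a connected 1-skeleton (or is empty). -/
def LinkConnected (K : SComplex) (s : Finset ℕ) : Prop :=
  ∀ y z, K.LinkVertex s y → K.LinkVertex s z → ReflTransGen (K.LinkAdj s) y z

open Classical in
/-- The vertices of the link of `s`, as a finite set. -/
noncomputable def linkVertices (K : SComplex) (s : Finset ℕ) : Finset ℕ :=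
  K.vertexSet.filter (K.LinkVertex s)

theorem mem_linkVertices : x ∈ K.linkVertices s ↔ K.LinkVertex s x := by
  simp only [linkVertices, Finset.mem_filter, and_iff_right_iff_imp]
  exact fun h => mem_vertexSet_of_mem h.2 (Finset.mem_insert_self x s)

theorem LinkAdj.symm (h : K.LinkAdj s y z) : K.LinkAdj s z y :=
  ⟨h.2.1, h.1, Finset.insert_comm y z s ▸ h.2.2⟩

instance : Std.Symm (K.LinkAdj s) := ⟨fun _ _ h => h.symm⟩

theorem LinkAdj.left (h : K.LinkAdj s y z) : K.LinkVertex s y :=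
  ⟨h.1, mem_of_subset h.2.2 (by grind) (Finset.insert_nonempty y s)⟩

theorem LinkAdj.right (h : K.LinkAdj s y z) : K.LinkVertex s z := h.symm.left

theorem linkVertex_insert (hx : x ∉ s) :
    K.LinkVertex (insert x s) y ↔ K.LinkAdj s x y ∧ y ≠ x := by
  rw [LinkVertex, LinkAdj, Finset.insert_comm y x]
  grind

theorem singleton_mem_lk : {y} ∈ (K.lk s).faces ↔ K.LinkVertex s y := by
  simp [mem_lk, LinkVertex, Finset.singleton_union]

theorem vertAdj_lk : (K.lk s).VertAdj = K.LinkAdj s := by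
  ext y z
  simp [VertAdj, mem_lk, LinkAdj, and_assoc]

theorem card_filter_card_succ {F : Finset (Finset ℕ)} {X : Finset ℕ}
    (hX : ∀ x, x ∈ X ↔ x ∉ s ∧ insert x s ∈ F) :
    (F.filter fun t => t.card = s.card + 1 ∧ s ⊆ t).card = X.card := by
  symm
  refine Finset.card_bij (fun x _ => insert x s) (fun x hx => ?_) (fun x hx y _ hxy => ?_)
    (fun t ht => ?_)
  · obtain ⟨hxs, hxF⟩ := (hX x).1 hx
    simp [hxF, hxs]
  · exact (Finset.insert_inj ((hX x).1 hx).1).1 hxy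
  · obtain ⟨htF, hcard, hst⟩ := Finset.mem_filter.1 ht
    obtain ⟨x, hxs, rfl⟩ := Finset.exists_eq_insert_iff.2 ⟨hst, hcard.symm⟩
    exact ⟨x, (hX x).2 ⟨hxs, htF⟩, rfl⟩

theorem fnum_zero : K.fnum 0 = (K.linkVertices ∅).card := by
  rw [← card_filter_card_succ (s := ∅) (F := K.faces) fun x => mem_linkVertices]
  simp [fnum]

theorem deg_eq_card_linkVertices : K.deg s = (K.linkVertices s).card := by
  rw [deg, fnum_zero]
  congr 1
  ext y
  rw [mem_linkVertices, mem_linkVertices, ← singleton_mem_lk (s := s)]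
  simp [LinkVertex]

theorem exists_isFacet_superset (hs : s ∈ K.faces) : ∃ F, K.IsFacet F ∧ s ⊆ F := by
  obtain ⟨F, hsF, hF⟩ := K.faces.exists_le_maximal hs
  exact ⟨F, ⟨hF.1, fun t ht hFt => le_antisymm hFt (hF.2 ht hFt)⟩, hsF⟩

end Links

section Normal

variable {K : SComplex} {s t e : Finset ℕ} {d v x y z : ℕ}

/-- A normal `d`-pseudomanifold described through the links of its faces. This is equivalent to
`IsNormalPseudomanifold`; strong connectedness becomes the connectedness of the link of the empty
face. -/
structure IsNormal (K : SComplex) (d : ℕ) : Prop where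
  nonempty : K.faces.Nonempty
  card_le : ∀ s ∈ K.faces, s.card ≤ d + 1
  exists_superset : ∀ s ∈ K.faces, ∃ F ∈ K.faces, s ⊆ F ∧ F.card = d + 1
  card_linkVertices : ∀ s ∈ K.faces, s.card = d → (K.linkVertices s).card = 2
  linkConnected : ∀ s, s = ∅ ∨ s ∈ K.faces → s.card < d → K.LinkConnected s

theorem StronglyConnected.linkConnected_empty (hK : K.StronglyConnected) (hp : K.IsPure d)
    (hd : 0 < d) : K.LinkConnected ∅ := by
  have adj_of_mem {F y z} (hF : K.IsFacet F) (hy : y ∈ F) (hz : z ∈ F) : K.LinkAdj ∅ y z :=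
    ⟨by simp, by simp, mem_of_subset hF.1 (by grind) (by simp)⟩
  have along {F F'} (hF : K.IsFacet F) (hFF' : ReflTransGen K.FacetAdj F F') :
      ∀ y ∈ F, ∀ z ∈ F', ReflTransGen (K.LinkAdj ∅) y z := by
    induction hFF' with
    | refl => exact fun y hy z hz => .single (adj_of_mem hF hy hz)
    | @tail b c _ hadj ih =>
      intro y hy z hz
      obtain ⟨ha, hb, hcard⟩ := hadj
      have := hp.2 _ ha
      obtain ⟨x, hx⟩ := Finset.card_pos.1 (by omega : 0 < (b ∩ c).card)
      rw [Finset.mem_inter] at hx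
      exact (ih y hy x hx.1).tail (adj_of_mem hb hx.2 hz)
  intro y z hy hz
  obtain ⟨F, hF, hyF⟩ := exists_isFacet_superset hy.2
  obtain ⟨F', hF', hzF'⟩ := exists_isFacet_superset hz.2
  exact along hF (hK F F' hF hF') y (hyF (by simp)) z (hzF' (by simp))

theorem IsNormalPseudomanifold.isNormal (h : K.IsNormalPseudomanifold d) : K.IsNormal d := by
  obtain ⟨hpure, hstrong, htwo, hlink⟩ := h
  refine ⟨hpure.1, fun s hs => ?_, fun s hs => ?_, fun s hs hsd => ?_, fun s hs hsd => ?_⟩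
  · obtain ⟨F, hF, hsF⟩ := exists_isFacet_superset hs
    exact hpure.2 F hF ▸ Finset.card_le_card hsF
  · obtain ⟨F, hF, hsF⟩ := exists_isFacet_superset hs
    exact ⟨F, hF.1, hsF, hpure.2 F hF⟩
  · rw [← htwo s hs hsd, ← hsd, card_filter_card_succ fun x => mem_linkVertices]
  · rcases hs with rfl | hs
    · exact hstrong.linkConnected_empty hpure (by simpa using hsd)
    · intro y z hy hz
      rw [← vertAdj_lk]
      exact (hlink s hs (by omega)).2 y z (singleton_mem_lk.2 hy) (singleton_mem_lk.2 hz)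

namespace IsNormal

theorem card_of_isFacet (hK : K.IsNormal d) (hs : K.IsFacet s) : s.card = d + 1 := by
  obtain ⟨F, hF, hsF, hcard⟩ := hK.exists_superset s hs.1
  rwa [hs.2 F hF hsF]

theorem exists_linkVertex (hK : K.IsNormal d) (hs : s ∈ K.faces) (hsd : s.card ≤ d) :
    ∃ y, K.LinkVertex s y := by
  obtain ⟨F, hF, hsF, hcard⟩ := hK.exists_superset s hs
  obtain ⟨y, hyF, hys⟩ := Finset.exists_mem_notMem_of_card_lt_card (by omega : s.card < F.card)
  exact ⟨y, hys, mem_of_subset hF (by grind) (by simp)⟩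

/-- Induction on the codimension `k` of a common face `s` of the two facets: a path in the link
of `s` lifts to a chain of facets, consecutive ones sharing a larger face. -/
theorem reflTransGen_facetAdj (hK : K.IsNormal d) : ∀ (k : ℕ) (s : Finset ℕ), s.card + k = d →
    ∀ F F', K.IsFacet F → K.IsFacet F' → s ⊆ F → s ⊆ F' → ReflTransGen K.FacetAdj F F' := by
  intro k
  induction k with
  | zero =>
    intro s hs F F' hF hF' hsF hsF'
    by_cases hFF' : F = F'
    · rw [hFF']
    have hcard := hK.card_of_isFacet hF
    have hle := Finset.card_le_card (Finset.subset_inter hsF hsF')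
    have hlt : (F ∩ F').card < F.card := Finset.card_lt_card
      ⟨Finset.inter_subset_left, fun h => hFF' (hF.2 F' hF'.1 (h.trans Finset.inter_subset_right))⟩
    exact .single ⟨hF, hF', by omega⟩
  | succ k ih =>
    intro s hs F F' hF hF' hsF hsF'
    have extend {G x} (hxs : x ∉ s) : ∀ G', K.IsFacet G → K.IsFacet G' → insert x s ⊆ G →
        insert x s ⊆ G' → ReflTransGen K.FacetAdj G G' := fun G' =>
      ih (insert x s) (by rw [Finset.card_insert_of_notMem hxs]; omega) G G'
    have exists_vertex {G} (hG : K.IsFacet G) (hsG : s ⊆ G) :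
        ∃ y, K.LinkVertex s y ∧ insert y s ⊆ G := by
      have := hK.card_of_isFacet hG
      obtain ⟨y, hyG, hys⟩ :=
        Finset.exists_mem_notMem_of_card_lt_card (by omega : s.card < G.card)
      have hsub := Finset.insert_subset hyG hsG
      exact ⟨y, ⟨hys, mem_of_subset hG.1 hsub (Finset.insert_nonempty y s)⟩, hsub⟩
    obtain ⟨y, hy, hyF⟩ := exists_vertex hF hsF
    obtain ⟨z, hz, hzF'⟩ := exists_vertex hF' hsF'
    have hpath : ReflTransGen (K.LinkAdj s) y z := by
      refine hK.linkConnected s ?_ (by omega) y z hy hz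
      exact s.eq_empty_or_nonempty.imp_right fun hne => mem_of_subset hF.1 hsF hne
    clear hz
    induction hpath generalizing F' with
    | refl => exact extend hy.1 F' hF hF' hyF hzF'
    | tail _ hadj ihp =>
      obtain ⟨G, hG, hsG⟩ := exists_isFacet_superset hadj.2.2
      exact (ihp G hG (by grind) (by grind)).trans
        (extend hadj.2.1 F' hG hF' (by grind) hzF')

theorem isNormalPseudomanifold (hK : K.IsNormal d) : K.IsNormalPseudomanifold d := by
  refine ⟨⟨hK.nonempty, fun s => hK.card_of_isFacet⟩, fun F F' hF hF' => ?_, fun s hs hsd => ?_,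
    fun s hs hsd => ?_⟩
  · exact hK.reflTransGen_facetAdj d ∅ (by simp) F F' hF hF' (by simp) (by simp)
  · rw [← hK.card_linkVertices s hs hsd, ← hsd, card_filter_card_succ fun x => mem_linkVertices]
  · have hpos := (nonempty_of_mem hs).card_pos
    obtain ⟨y, hy⟩ := hK.exists_linkVertex hs (by omega)
    refine ⟨⟨{y}, singleton_mem_lk.2 hy⟩, fun y z hy hz => ?_⟩
    rw [vertAdj_lk]
    exact hK.linkConnected s (.inr hs) (by omega) y z (singleton_mem_lk.1 hy)
      (singleton_mem_lk.1 hz)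

end IsNormal

theorem reachable_of_odd_degree {V : Type*} [Fintype V] {H : SimpleGraph V} [DecidableRel H.Adj]
    {y z : V} (hy : Odd (H.degree y)) (h : ∀ x, Odd (H.degree x) → x = y ∨ x = z) :
    H.Reachable y z := by
  classical
  let C : SimpleGraph V :=
    { Adj := fun a b => H.Adj a b ∧ H.Reachable y a
      symm := ⟨fun a b hab => ⟨hab.1.symm, hab.2.trans hab.1.reachable⟩⟩
      loopless := ⟨fun a ha => H.irrefl ha.1⟩ }
  have degree_eq {x} (hx : H.Reachable y x) : C.degree x = H.degree x := by
    simp only [← SimpleGraph.card_neighborFinset_eq_degree]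
    congr 1
    ext b
    simp [C, hx]
  obtain ⟨x, hxy, hx⟩ :=
    C.exists_ne_odd_degree_of_exists_odd_degree y (degree_eq (.refl y) ▸ hy)
  have hyx : H.Reachable y x := by
    obtain ⟨b, hb⟩ := (C.degree_pos_iff_exists_adj x).1 hx.pos
    exact hb.2
  rcases h x (degree_eq hyx ▸ hx) with rfl | rfl
  · exact absurd rfl hxy
  · exact hyx

/-- The 1-skeleton of the link of `s` with all edges at the vertex `v` removed. -/
def linkGraphAvoiding (K : SComplex) (s : Finset ℕ) (v : ℕ) :
    SimpleGraph {x // x ∈ K.linkVertices s} where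
  Adj a b := a ≠ b ∧ K.LinkAdj s a b ∧ a.1 ≠ v ∧ b.1 ≠ v
  symm := ⟨fun _ _ h => ⟨h.1.symm, h.2.1.symm, h.2.2.2, h.2.2.1⟩⟩
  loopless := ⟨fun _ h => h.1 rfl⟩

open Classical in
theorem degree_linkGraphAvoiding (x : {x // x ∈ K.linkVertices s}) (hxv : x.1 ≠ v) :
    (K.linkGraphAvoiding s v).degree x = ((K.linkVertices (insert x.1 s)).erase v).card := by
  have hxs := (mem_linkVertices.1 x.2).1
  rw [← SimpleGraph.card_neighborFinset_eq_degree]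
  refine Finset.card_bij (fun b _ => b.1) (fun b hb => ?_) (fun b _ c _ h => Subtype.ext h)
    (fun b hb => ?_)
  · obtain ⟨hxb, hadj, -, hbv⟩ := (SimpleGraph.mem_neighborFinset _ x b).1 hb
    exact Finset.mem_erase.2 ⟨hbv, mem_linkVertices.2
      ((linkVertex_insert hxs).2 ⟨hadj, fun h => hxb (Subtype.ext h.symm)⟩)⟩
  · obtain ⟨hbv, hb⟩ := Finset.mem_erase.1 hb
    obtain ⟨hxb, hbx⟩ := (linkVertex_insert hxs).1 (mem_linkVertices.1 hb)
    exact ⟨⟨b, mem_linkVertices.2 hxb.right⟩, (SimpleGraph.mem_neighborFinset _ x _).2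
      ⟨fun h => hbx (congrArg Subtype.val h).symm, hxb, hxv, hbv⟩, rfl⟩

namespace IsNormal

/-- The link of a codimension-two face is a disjoint union of cycles: with `v` removed, the two
neighbours of `v` are the only vertices of odd degree, so they lie in the same component. -/
theorem reflTransGen_avoiding_of_card_succ_eq (hK : K.IsNormal d) (hs : s.card + 1 = d)
    (hv : v ∉ s) (hy : K.LinkVertex (insert v s) y) (hz : K.LinkVertex (insert v s) z)
    (hyz : y ≠ z) : ReflTransGen (fun a b => K.LinkAdj s a b ∧ a ≠ v ∧ b ≠ v) y z := by
  classical
  have card_two {x} (hx : K.LinkVertex s x) : (K.linkVertices (insert x s)).card = 2 :=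
    hK.card_linkVertices _ hx.2 (by rw [Finset.card_insert_of_notMem hx.1, hs])
  have neighbors_v : K.linkVertices (insert v s) = {y, z} := by
    have hvs := ((linkVertex_insert hv).1 hy).1.left
    refine (Finset.eq_of_subset_of_card_le (fun x hx => ?_) ?_).symm
    · rcases Finset.mem_insert.1 hx with rfl | hx
      · exact mem_linkVertices.2 hy
      · exact Finset.mem_singleton.1 hx ▸ mem_linkVertices.2 hz
    · rw [card_two hvs, Finset.card_pair hyz]
  obtain ⟨hvy, hyv⟩ := (linkVertex_insert hv).1 hy
  obtain ⟨hvz, hzv⟩ := (linkVertex_insert hv).1 hz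
  have odd_y : Odd ((K.linkGraphAvoiding s v).degree ⟨y, mem_linkVertices.2 hvy.right⟩) := by
    rw [degree_linkGraphAvoiding _ hyv, Finset.card_erase_of_mem, card_two hvy.right]
    · exact odd_one
    · exact mem_linkVertices.2 ((linkVertex_insert hvy.right.1).2 ⟨hvy.symm, hyv.symm⟩)
  have hreach := reachable_of_odd_degree (z := ⟨z, mem_linkVertices.2 hvz.right⟩) odd_y ?_
  · rw [SimpleGraph.reachable_iff_reflTransGen] at hreach
    exact ReflTransGen.lift Subtype.val (fun a b hab => hab.2) _ _ hreach
  rintro ⟨x, hx⟩ hodd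
  have hxs := (mem_linkVertices.1 hx).1
  have hxv : x ≠ v := by
    rintro rfl
    obtain ⟨b, hb⟩ := (SimpleGraph.degree_pos_iff_exists_adj _ _).1 hodd.pos
    exact hb.2.2.1 rfl
  have hvx : v ∈ K.linkVertices (insert x s) := by
    by_contra hvx
    rw [degree_linkGraphAvoiding _ hxv, Finset.erase_eq_of_notMem hvx,
      card_two (mem_linkVertices.1 hx)] at hodd
    exact absurd hodd (by decide)
  have hxadj := ((linkVertex_insert hxs).1 (mem_linkVertices.1 hvx)).1
  have : x ∈ K.linkVertices (insert v s) :=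
    mem_linkVertices.2 ((linkVertex_insert hv).2 ⟨hxadj.symm, hxv⟩)
  simpa [neighbors_v, Subtype.ext_iff] using this

theorem reflTransGen_avoiding_of_linkVertex_insert (hK : K.IsNormal d) (hs : s.card < d)
    (hv : v ∉ s) (hy : K.LinkVertex (insert v s) y) (hz : K.LinkVertex (insert v s) z) :
    ReflTransGen (fun a b => K.LinkAdj s a b ∧ a ≠ v ∧ b ≠ v) y z := by
  rcases (by omega : s.card + 1 = d ∨ s.card + 1 < d) with hs | hs
  · by_cases hyz : y = z
    · rw [hyz]
    · exact hK.reflTransGen_avoiding_of_card_succ_eq hs hv hy hz hyz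
  · have hvs : insert v s ∈ K.faces := ((linkVertex_insert hv).1 hy).1.left.2
    have hpath := hK.linkConnected _ (.inr hvs)
      (by rwa [Finset.card_insert_of_notMem hv]) y z hy hz
    refine ReflTransGen.mono (fun a b ⟨ha, hb, hab⟩ => ?_) _ _ hpath
    rw [Finset.mem_insert, not_or] at ha hb
    exact ⟨⟨ha.2, hb.2, mem_of_subset hab (by grind) (Finset.insert_nonempty _ _)⟩, ha.1, hb.1⟩

theorem reflTransGen_avoiding (hK : K.IsNormal d) (hs : s.card < d)
    (hy : K.LinkVertex s y) (hyv : y ≠ v) (hz : K.LinkVertex s z) (hzv : z ≠ v) :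
    ReflTransGen (fun a b => K.LinkAdj s a b ∧ a ≠ v ∧ b ≠ v) y z := by
  have hpath := hK.linkConnected s (s.eq_empty_or_nonempty.imp_right
    (mem_of_subset hy.2 (Finset.subset_insert y s))) hs y z hy hz
  by_cases hv : K.LinkVertex s v
  · obtain ⟨c, hc⟩ := hK.exists_linkVertex hv.2 (by rw [Finset.card_insert_of_notMem hv.1]; omega)
    have hdetour {b} (hb : K.LinkAdj s v b) (hbv : b ≠ v) :=
      hK.reflTransGen_avoiding_of_linkVertex_insert hs hv.1 hc
        ((linkVertex_insert hv.1).2 ⟨hb, hbv⟩)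
    have : Std.Symm fun a b => K.LinkAdj s a b ∧ a ≠ v ∧ b ≠ v :=
      ⟨fun _ _ h => ⟨h.1.symm, h.2.2, h.2.1⟩⟩
    have := ReflTransGen.lift' (p := fun a b => K.LinkAdj s a b ∧ a ≠ v ∧ b ≠ v)
      (fun x => if x = v then c else x) (fun a b hab => ?_) _ _ hpath
    · simpa [Function.onFun, hyv, hzv] using this
    · by_cases hav : a = v <;> by_cases hbv : b = v <;>
        simp only [Function.onFun, hav, hbv, if_true, if_false]
      · rfl
      · exact hdetour (hav ▸ hab) hbv
      · exact symm_of _ (hdetour (hbv ▸ hab.symm) hav)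
      · exact .single ⟨hab, hav, hbv⟩
  · exact ReflTransGen.mono (fun a b hab => ⟨hab, fun h => hv (h ▸ hab.left),
      fun h => hv (h ▸ hab.right)⟩) _ _ hpath

end IsNormal

end Normal

section Contraction

variable {K : SComplex} {s p : Finset ℕ} {d u v w x y z : ℕ}

/-- The map identifying the vertices `u` and `v` to the vertex `w`. -/
def merge (u v w x : ℕ) : ℕ := if x = u ∨ x = v then w else x

/-- The contraction of the edge `uv` to the vertex `w`, as the image of `K` under the simplicial map
`merge u v w`. -/
def contract (K : SComplex) (u v w : ℕ) : SComplex where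
  faces := K.faces.image (Finset.image (merge u v w))
  not_empty_mem := by simp [K.not_empty_mem]
  down_closed s hs t hts ht := by
    obtain ⟨r, hr, rfl⟩ := Finset.mem_image.1 hs
    obtain ⟨r', hr', rfl⟩ := Finset.subset_image_iff.1 hts
    exact Finset.mem_image_of_mem _
      (mem_of_subset hr hr' (Finset.image_nonempty.1 (Finset.nonempty_iff_ne_empty.2 ht)))

/-- The vertices `u` and `v` span an edge of `K` satisfying the link condition, and `w` is a new
vertex to contract this edge to. The link condition `lk u ∩ lk v = lk uv` is stated face by
face. -/
structure IsContractible (K : SComplex) (u v w : ℕ) : Prop where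
  ne : u ≠ v
  edge : {u, v} ∈ K.faces
  linkCondition : ∀ p, u ∉ p → v ∉ p → insert u p ∈ K.faces → insert v p ∈ K.faces →
    insert u (insert v p) ∈ K.faces
  fresh : w ∉ K.vertexSet

theorem merge_left : merge u v w u = w := by simp [merge]

theorem merge_right : merge u v w v = w := by simp [merge]

theorem merge_of_ne (hu : x ≠ u) (hv : x ≠ v) : merge u v w x = x := by simp [merge, hu, hv]

theorem image_merge (hu : u ∉ s) (hv : v ∉ s) : s.image (merge u v w) = s := by
  refine (Finset.image_congr fun x hx => merge_of_ne ?_ ?_).trans Finset.image_id <;>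
    exact fun h => by simp_all

theorem image_mem_contract (hs : s ∈ K.faces) :
    s.image (merge u v w) ∈ (K.contract u v w).faces :=
  Finset.mem_image_of_mem _ hs

theorem mem_contract (hw : w ∉ s) :
    s ∈ (K.contract u v w).faces ↔ u ∉ s ∧ v ∉ s ∧ s ∈ K.faces := by
  refine ⟨fun hs => ?_, fun ⟨hu, hv, hs⟩ => image_merge hu hv ▸ image_mem_contract hs⟩
  obtain ⟨t, ht, rfl⟩ := Finset.mem_image.1 hs
  have hu : u ∉ t := fun hu => hw (Finset.mem_image.2 ⟨u, hu, merge_left⟩)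
  have hv : v ∉ t := fun hv => hw (Finset.mem_image.2 ⟨v, hv, merge_right⟩)
  rw [image_merge hu hv]
  exact ⟨hu, hv, ht⟩

/-- The edges `vx` of `K` with `x = u` or `x` in the link of `uv`. The remaining edges of `K` still
map onto the edges of the contraction of `uv`, because `ux` has the same image as `vx`. -/
noncomputable def redundantEdges (K : SComplex) (u v : ℕ) : Finset (Finset ℕ) :=
  (insert u (K.linkVertices {u, v})).image fun x => {v, x}

theorem mem_redundantEdges :
    s ∈ K.redundantEdges u v ↔ s = {v, u} ∨ ∃ x, K.LinkVertex {u, v} x ∧ s = {v, x} := by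
  simp [redundantEdges, mem_linkVertices, eq_comm]

theorem card_redundantEdges (huv : u ≠ v) : (K.redundantEdges u v).card = K.deg {u, v} + 1 := by
  rw [redundantEdges, Finset.card_image_of_injOn, Finset.card_insert_of_notMem,
    deg_eq_card_linkVertices]
  · simp [mem_linkVertices, LinkVertex]
  · intro x hx y hy hxy
    simp only [Finset.coe_insert, Set.mem_insert_iff, Finset.mem_coe, mem_linkVertices,
      LinkVertex] at hx hy
    have hx' : x ∈ ({v, y} : Finset ℕ) := (show ({v, x} : Finset ℕ) = {v, y} from hxy) ▸ by simp
    grind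

theorem redundantEdges_subset (huv : u ≠ v) (hK : {u, v} ∈ K.faces) :
    K.redundantEdges u v ⊆ K.faces.filter fun s => s.card = 1 + 1 := by
  intro s hs
  rcases mem_redundantEdges.1 hs with rfl | ⟨x, ⟨hx, hxK⟩, rfl⟩
  · exact Finset.mem_filter.2 ⟨Finset.pair_comm u v ▸ hK, Finset.card_pair huv.symm⟩
  · refine Finset.mem_filter.2 ⟨mem_of_subset hxK (by grind) (by simp), Finset.card_pair ?_⟩
    grind

theorem contract_comm : K.contract v u w = K.contract u v w := by
  have : merge v u w = merge u v w := by ext x; simp only [merge, or_comm]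
  simp only [contract, this]

namespace IsContractible

theorem symm (h : K.IsContractible u v w) : K.IsContractible v u w :=
  ⟨h.ne.symm, Finset.pair_comm u v ▸ h.edge,
    fun p hv hu hvp hup => Finset.insert_comm u v p ▸ h.linkCondition p hu hv hup hvp, h.fresh⟩

theorem notMem (h : K.IsContractible u v w) (hs : s ∈ K.faces) : w ∉ s :=
  fun hw => h.fresh (mem_vertexSet_of_mem hs hw)

theorem ne_left (h : K.IsContractible u v w) : w ≠ u := by
  have := h.notMem h.edge
  grind

theorem ne_right (h : K.IsContractible u v w) : w ≠ v := h.symm.ne_left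

theorem insert_mem_contract (h : K.IsContractible u v w) (hw : w ∉ p) :
    insert w p ∈ (K.contract u v w).faces ↔
      u ∉ p ∧ v ∉ p ∧ (insert u p ∈ K.faces ∨ insert v p ∈ K.faces) := by
  refine ⟨fun hp => ?_, ?_⟩
  · obtain ⟨t, ht, hpt⟩ := Finset.mem_image.1 hp
    have hmerge x : x ∈ insert w p ↔ ∃ y ∈ t, merge u v w y = x := by
      rw [← hpt, Finset.mem_image]
    have hwt := h.notMem ht
    have := h.ne_left
    have := h.ne_right
    simp only [merge, Finset.mem_insert] at hmerge
    refine ⟨by grind, by grind, ?_⟩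
    rcases (by grind : u ∈ t ∨ v ∈ t) with hut | hvt
    · exact .inl (mem_of_subset ht (by grind) (Finset.insert_nonempty _ _))
    · exact .inr (mem_of_subset ht (by grind) (Finset.insert_nonempty _ _))
  · rintro ⟨hu, hv, hp | hp⟩ <;> have := image_mem_contract (u := u) (v := v) (w := w) hp
    · rwa [Finset.image_insert, merge_left, image_merge hu hv] at this
    · rwa [Finset.image_insert, merge_right, image_merge hu hv] at this

theorem linkVertex_contract (h : K.IsContractible u v w) (hw : w ∉ s) (hu : u ∉ s) (hv : v ∉ s) :
    (K.contract u v w).LinkVertex s x ↔ ∃ y, K.LinkVertex s y ∧ merge u v w y = x := by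
  by_cases hxw : x = w
  · subst hxw
    have : ∀ y, K.LinkVertex s y → y ≠ x := fun y hy hyx => h.notMem hy.2 (by simp [hyx])
    rw [LinkVertex, h.insert_mem_contract hw]
    simp only [LinkVertex, merge] at this ⊢
    grind
  · rw [LinkVertex, mem_contract (by grind)]
    simp only [LinkVertex, merge]
    grind

theorem linkAdj_contract (h : K.IsContractible u v w) (hw : w ∉ s) (hu : u ∉ s) (hv : v ∉ s)
    (hyz : K.LinkAdj s y z) :
    (K.contract u v w).LinkAdj s (merge u v w y) (merge u v w z) := by
  have hy := (h.linkVertex_contract hw hu hv).2 ⟨y, hyz.left, rfl⟩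
  have hz := (h.linkVertex_contract hw hu hv).2 ⟨z, hyz.right, rfl⟩
  have := image_mem_contract (u := u) (v := v) (w := w) hyz.2.2
  rw [Finset.image_insert, Finset.image_insert, image_merge hu hv] at this
  exact ⟨hy.1, hz.1, this⟩

theorem linkAdj_insert_contract (h : K.IsContractible u v w) (hw : w ∉ p) (hu : u ∉ p)
    (hv : v ∉ p) (hyz : K.LinkAdj (insert u p) y z) (hy : y ≠ v) (hz : z ≠ v) :
    (K.contract u v w).LinkAdj (insert w p) y z := by
  obtain ⟨hyu, hzu, hyz⟩ := hyz
  have hwyz := h.notMem hyz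
  rw [LinkAdj, show insert y (insert z (insert w p)) = insert w (insert y (insert z p)) by grind,
    h.insert_mem_contract (by grind)]
  rw [show insert y (insert z (insert u p)) = insert u (insert y (insert z p)) by grind] at hyz
  grind

theorem linkVertex_insert_contract (h : K.IsContractible u v w) (hw : w ∉ p) (hu : u ∉ p)
    (hv : v ∉ p) : (K.contract u v w).LinkVertex (insert w p) y ↔
      K.LinkVertex (insert u p) y ∧ y ≠ v ∨ K.LinkVertex (insert v p) y ∧ y ≠ u := by
  have hyw {x} : insert y (insert x p) ∈ K.faces → y ≠ w :=
    fun hx hyw => h.notMem hx (by simp [hyw])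
  have := @hyw u
  have := @hyw v
  have hcomm x : insert x (insert y p) = insert y (insert x p) := Finset.insert_comm x y p
  by_cases hy : y = w
  · simp only [LinkVertex]
    grind
  · rw [LinkVertex, Finset.insert_comm, h.insert_mem_contract (by grind), hcomm, hcomm]
    simp only [LinkVertex]
    grind

theorem insert_notMem_of_card_eq (h : K.IsContractible u v w) (hK : K.IsNormal d)
    (hp : p.card = d) (hu : u ∉ p) (hv : v ∉ p) (hup : insert u p ∈ K.faces) :
    insert v p ∉ K.faces := by
  intro hvp
  have := hK.card_le _ (h.linkCondition p hu hv hup hvp)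
  rw [Finset.card_insert_of_notMem (by simp [h.ne, hu]), Finset.card_insert_of_notMem hv] at this
  omega

end IsContractible

namespace IsNormal

theorem exists_superset_avoiding (hK : K.IsNormal d) (hu : u ∉ p) (hv : v ∉ p) (huv : u ≠ v)
    (hup : insert u p ∈ K.faces) :
    ∃ r, p ⊆ r ∧ r.card = d ∧ u ∉ r ∧ v ∉ r ∧ insert u r ∈ K.faces := by
  obtain ⟨F, hF, hpF, hcard⟩ := hK.exists_superset _ hup
  by_cases hvF : v ∈ F
  · have hne : (F.erase v).Nonempty := ⟨u, by grind⟩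
    have hcardE : (F.erase v).card = d := by rw [Finset.card_erase_of_mem hvF]; omega
    have htwo := hK.card_linkVertices _ (mem_of_subset hF (Finset.erase_subset v F) hne) hcardE
    obtain ⟨x, hx, hxv⟩ := Finset.exists_mem_ne (htwo ▸ one_lt_two) v
    obtain ⟨hxF, hxK⟩ := mem_linkVertices.1 hx
    have huF : u ∈ insert x (F.erase v) := by grind
    refine ⟨(insert x (F.erase v)).erase u, by grind, ?_, by grind, by grind, ?_⟩
    · rw [Finset.card_erase_of_mem huF, Finset.card_insert_of_notMem hxF, hcardE,
        Nat.add_sub_cancel]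
    · rwa [Finset.insert_erase huF]
  · have huF : u ∈ F := by grind
    refine ⟨F.erase u, by grind, ?_, by grind, by grind, by rwa [Finset.insert_erase huF]⟩
    rw [Finset.card_erase_of_mem huF]
    omega

end IsNormal

namespace IsContractible

theorem exists_superset_insert_contract (h : K.IsContractible u v w) (hK : K.IsNormal d)
    (hu : u ∉ p) (hv : v ∉ p) (hp : insert u p ∈ K.faces ∨ insert v p ∈ K.faces) :
    ∃ F ∈ (K.contract u v w).faces, insert w p ⊆ F ∧ F.card = d + 1 := by
  wlog hup : insert u p ∈ K.faces generalizing u v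
  · rw [← contract_comm]
    exact this h.symm hv hu hp.symm (hp.resolve_left hup)
  obtain ⟨r, hpr, hcard, hur, hvr, hr⟩ := hK.exists_superset_avoiding hu hv h.ne hup
  have hwr : w ∉ r := fun hwr => h.notMem hr (Finset.mem_insert_of_mem hwr)
  exact ⟨insert w r, (h.insert_mem_contract hwr).2 ⟨hur, hvr, .inl hr⟩,
    Finset.insert_subset_insert w hpr, by rw [Finset.card_insert_of_notMem hwr, hcard]⟩

theorem card_linkVertices_contract (h : K.IsContractible u v w) (hK : K.IsNormal d)
    (hw : w ∉ s) (hu : u ∉ s) (hv : v ∉ s) (hs : s ∈ K.faces) (hsd : s.card = d) :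
    ((K.contract u v w).linkVertices s).card = 2 := by
  have himage : (K.contract u v w).linkVertices s = (K.linkVertices s).image (merge u v w) := by
    ext x
    simp only [mem_linkVertices, Finset.mem_image, h.linkVertex_contract hw hu hv]
  rw [himage, ← hK.card_linkVertices s hs hsd]
  refine Finset.card_image_of_injOn fun x hx y hy hxy => ?_
  have hx := mem_linkVertices.1 hx
  have hy := mem_linkVertices.1 hy
  have hxw := h.notMem hx.2
  have hyw := h.notMem hy.2
  have hnot := h.insert_notMem_of_card_eq hK hsd hu hv
  have hxs := hx.2
  have hys := hy.2
  simp only [merge] at hxy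
  grind

theorem card_linkVertices_insert_contract (h : K.IsContractible u v w) (hK : K.IsNormal d)
    (hw : w ∉ p) (hu : u ∉ p) (hv : v ∉ p) (hp : insert u p ∈ K.faces ∨ insert v p ∈ K.faces)
    (hpd : p.card + 1 = d) : ((K.contract u v w).linkVertices (insert w p)).card = 2 := by
  wlog hup : insert u p ∈ K.faces generalizing u v
  · rw [← contract_comm]
    exact this h.symm hv hu hp.symm (hp.resolve_left hup)
  have card_two {x} (hx : x ∉ p) (hxp : insert x p ∈ K.faces) :
      (K.linkVertices (insert x p)).card = 2 :=
    hK.card_linkVertices _ hxp (by rw [Finset.card_insert_of_notMem hx, hpd])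
  by_cases hvp : insert v p ∈ K.faces
  · have huv := h.linkCondition p hu hv hup hvp
    have hunion : (K.contract u v w).linkVertices (insert w p) =
        (K.linkVertices (insert u p)).erase v ∪ (K.linkVertices (insert v p)).erase u := by
      ext x
      simp only [mem_linkVertices, h.linkVertex_insert_contract hw hu hv, Finset.mem_union,
        Finset.mem_erase, and_comm]
    have hdisj : Disjoint ((K.linkVertices (insert u p)).erase v)
        ((K.linkVertices (insert v p)).erase u) := by
      refine Finset.disjoint_left.2 fun x hxu hxv => ?_
      obtain ⟨hxv', hxu⟩ := Finset.mem_erase.1 hxu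
      obtain ⟨hxu', hxv⟩ := Finset.mem_erase.1 hxv
      obtain ⟨hxup, hxuK⟩ := mem_linkVertices.1 hxu
      have hxvK := (mem_linkVertices.1 hxv).2
      rw [Finset.insert_comm] at hxuK hxvK
      refine h.insert_notMem_of_card_eq hK ?_ ?_ ?_ hxuK hxvK <;> grind
    rw [hunion, Finset.card_union_of_disjoint hdisj, Finset.card_erase_of_mem,
      Finset.card_erase_of_mem, card_two hu hup, card_two hv hvp]
    · exact mem_linkVertices.2 ⟨by simp [h.ne, hu], huv⟩
    · exact mem_linkVertices.2 ⟨by simp [h.ne.symm, hv], Finset.insert_comm u v p ▸ huv⟩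
  · rw [← card_two hu hup]
    congr 1
    ext x
    rw [mem_linkVertices, mem_linkVertices, h.linkVertex_insert_contract hw hu hv]
    have hright : ¬ K.LinkVertex (insert v p) x := fun hx =>
      hvp (((linkVertex_insert hv).1 hx).1.left.2)
    have hne : K.LinkVertex (insert u p) x → x ≠ v := fun hx hxv =>
      hvp (hxv ▸ ((linkVertex_insert hu).1 hx).1.right.2)
    tauto

theorem linkConnected_contract (h : K.IsContractible u v w) (hK : K.IsNormal d)
    (hw : w ∉ s) (hu : u ∉ s) (hv : v ∉ s) (hs : s = ∅ ∨ s ∈ K.faces) (hsd : s.card < d) :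
    (K.contract u v w).LinkConnected s := by
  intro y z hy hz
  obtain ⟨y', hy', rfl⟩ := (h.linkVertex_contract hw hu hv).1 hy
  obtain ⟨z', hz', rfl⟩ := (h.linkVertex_contract hw hu hv).1 hz
  exact ReflTransGen.lift (merge u v w) (fun _ _ => h.linkAdj_contract hw hu hv) _ _
    (hK.linkConnected s hs hsd y' z' hy' hz')

theorem linkConnected_insert_contract (h : K.IsContractible u v w) (hK : K.IsNormal d)
    (hw : w ∉ p) (hu : u ∉ p) (hv : v ∉ p) (hpd : p.card + 1 < d) :
    (K.contract u v w).LinkConnected (insert w p) := by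
  have along_left {y z} (hy : K.LinkVertex (insert u p) y) (hyv : y ≠ v)
      (hz : K.LinkVertex (insert u p) z) (hzv : z ≠ v) :
      ReflTransGen ((K.contract u v w).LinkAdj (insert w p)) y z :=
    ReflTransGen.mono (fun a b hab => h.linkAdj_insert_contract hw hu hv hab.1 hab.2.1 hab.2.2) _ _
      (hK.reflTransGen_avoiding (by rwa [Finset.card_insert_of_notMem hu]) hy hyv hz hzv)
  have along_right {y z} (hy : K.LinkVertex (insert v p) y) (hyu : y ≠ u)
      (hz : K.LinkVertex (insert v p) z) (hzu : z ≠ u) :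
      ReflTransGen ((K.contract u v w).LinkAdj (insert w p)) y z := by
    rw [← contract_comm]
    exact ReflTransGen.mono
      (fun a b hab => h.symm.linkAdj_insert_contract hw hv hu hab.1 hab.2.1 hab.2.2) _ _
      (hK.reflTransGen_avoiding (by rwa [Finset.card_insert_of_notMem hv]) hy hyu hz hzu)
  have across {y z} (hy : K.LinkVertex (insert u p) y) (hyv : y ≠ v)
      (hz : K.LinkVertex (insert v p) z) (hzu : z ≠ u) :
      ReflTransGen ((K.contract u v w).LinkAdj (insert w p)) y z := by
    have huv := h.linkCondition p hu hv (((linkVertex_insert hu).1 hy).1.left.2)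
      (((linkVertex_insert hv).1 hz).1.left.2)
    have huvp : u ∉ insert v p := by simp [h.ne, hu]
    have hvup : v ∉ insert u p := by simp [h.ne.symm, hv]
    obtain ⟨c, hc⟩ := hK.exists_linkVertex huv (by
      rw [Finset.card_insert_of_notMem huvp, Finset.card_insert_of_notMem hv]
      omega)
    obtain ⟨hcv, hcu⟩ := (linkVertex_insert huvp).1 hc
    obtain ⟨hcu', hcv'⟩ := (linkVertex_insert hvup).1 (Finset.insert_comm u v p ▸ hc)
    exact (along_left hy hyv hcu'.right hcv').trans (along_right hcv.right hcu hz hzu)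
  intro y z hy hz
  rcases (h.linkVertex_insert_contract hw hu hv).1 hy with ⟨hy, hy'⟩ | ⟨hy, hy'⟩ <;>
    rcases (h.linkVertex_insert_contract hw hu hv).1 hz with ⟨hz, hz'⟩ | ⟨hz, hz'⟩
  · exact along_left hy hy' hz hz'
  · exact across hy hy' hz hz'
  · exact symm_of _ (across hz hz' hy hy')
  · exact along_right hy hy' hz hz'

theorem mem_contract_cases (h : K.IsContractible u v w) (hs : s ∈ (K.contract u v w).faces) :
    (w ∉ s ∧ u ∉ s ∧ v ∉ s ∧ s ∈ K.faces) ∨ ∃ p, s = insert w p ∧ w ∉ p ∧ u ∉ p ∧ v ∉ p ∧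
      (insert u p ∈ K.faces ∨ insert v p ∈ K.faces) := by
  by_cases hw : w ∈ s
  · refine .inr ⟨s.erase w, (Finset.insert_erase hw).symm, Finset.notMem_erase w s, ?_⟩
    exact (h.insert_mem_contract (Finset.notMem_erase w s)).1 (by rwa [Finset.insert_erase hw])
  · exact .inl ⟨hw, (mem_contract hw).1 hs⟩

theorem exists_superset_contract (h : K.IsContractible u v w) (hK : K.IsNormal d)
    (hs : s ∈ (K.contract u v w).faces) :
    ∃ F ∈ (K.contract u v w).faces, s ⊆ F ∧ F.card = d + 1 := by
  rcases h.mem_contract_cases hs with ⟨-, hu, hv, hs⟩ | ⟨p, rfl, -, hu, hv, hp⟩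
  · obtain ⟨F, hF, hsF, hcard⟩ := hK.exists_superset s hs
    have insert_mem {x} (hx : x ∈ F) : insert x s ∈ K.faces :=
      mem_of_subset hF (Finset.insert_subset hx hsF) (Finset.insert_nonempty _ _)
    by_cases huv : u ∈ F ∨ v ∈ F
    · obtain ⟨G, hG, hsG, hcard⟩ :=
        h.exists_superset_insert_contract hK hu hv (huv.imp insert_mem insert_mem)
      exact ⟨G, hG, (Finset.subset_insert w s).trans hsG, hcard⟩
    · push Not at huv
      exact ⟨F, (mem_contract (h.notMem hF)).2 ⟨huv.1, huv.2, hF⟩, hsF, hcard⟩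
  · exact h.exists_superset_insert_contract hK hu hv hp

theorem isNormal_contract (h : K.IsContractible u v w) (hK : K.IsNormal d) :
    (K.contract u v w).IsNormal d := by
  refine ⟨Finset.image_nonempty.2 hK.nonempty, fun s hs => ?_,
    fun s => h.exists_superset_contract hK, fun s hs hsd => ?_, fun s hs hsd => ?_⟩
  · obtain ⟨t, ht, rfl⟩ := Finset.mem_image.1 hs
    exact Finset.card_image_le.trans (hK.card_le t ht)
  · rcases h.mem_contract_cases hs with ⟨hw, hu, hv, hs⟩ | ⟨p, rfl, hw, hu, hv, hp⟩
    · exact h.card_linkVertices_contract hK hw hu hv hs hsd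
    · exact h.card_linkVertices_insert_contract hK hw hu hv hp
        (by rwa [Finset.card_insert_of_notMem hw] at hsd)
  · rcases hs with rfl | hs
    · exact h.linkConnected_contract hK (by simp) (by simp) (by simp) (.inl rfl) hsd
    rcases h.mem_contract_cases hs with ⟨hw, hu, hv, hs⟩ | ⟨p, rfl, hw, hu, hv, -⟩
    · exact h.linkConnected_contract hK hw hu hv (.inr hs) hsd
    · exact h.linkConnected_insert_contract hK hw hu hv
        (by rwa [Finset.card_insert_of_notMem hw] at hsd)

theorem card_filter_facets_eq_one (h : K.IsContractible u v w) (hK : K.IsNormal d)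
    (hs : s ∈ K.faces) (hu : u ∉ s) (hv : v ∉ s) (hsd : s.card = d) :
    ((K.faces.filter fun α => u ∉ α ∧ v ∉ α).filter fun t => t.card = d + 1 ∧ s ⊆ t).card = 1 ↔
      insert u s ∈ K.faces ∨ insert v s ∈ K.faces := by
  have hL := hK.card_linkVertices s hs hsd
  have hnot := h.insert_notMem_of_card_eq hK hsd hu hv
  rw [← hsd, card_filter_card_succ (X := ((K.linkVertices s).erase u).erase v)]
  · by_cases hus : insert u s ∈ K.faces <;> by_cases hvs : insert v s ∈ K.faces
    · exact absurd hvs (hnot hus)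
    all_goals
      simp [mem_linkVertices, LinkVertex, hu, hv, hus, hvs, hL]
  · simp only [Finset.mem_erase, mem_linkVertices, LinkVertex, Finset.mem_filter]
    grind

theorem mem_bdryFaces_iff (h : K.IsContractible u v w) (hK : K.IsNormal d) :
    s ∈ bdryFaces (K.faces.filter fun α => u ∉ α ∧ v ∉ α) d ↔
      s.Nonempty ∧ u ∉ s ∧ v ∉ s ∧ (insert u s ∈ K.faces ∨ insert v s ∈ K.faces) := by
  simp only [bdryFaces, Finset.mem_filter]
  constructor
  · rintro ⟨⟨hs, hu, hv⟩, r, ⟨hr, hur, hvr⟩, hsr, hrd, hcard⟩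
    refine ⟨nonempty_of_mem hs, hu, hv,
      ((h.card_filter_facets_eq_one hK hr hur hvr hrd).1 hcard).imp ?_ ?_⟩ <;>
      exact fun hr => mem_of_subset hr (Finset.insert_subset_insert _ hsr)
        (Finset.insert_nonempty _ _)
  · rintro ⟨hne, hu, hv, hs⟩
    obtain ⟨r, hsr, hrd, hur, hvr, hr⟩ : ∃ r, s ⊆ r ∧ r.card = d ∧ u ∉ r ∧ v ∉ r ∧
        (insert u r ∈ K.faces ∨ insert v r ∈ K.faces) := by
      rcases hs with hs | hs
      · obtain ⟨r, hsr, hrd, hur, hvr, hr⟩ := hK.exists_superset_avoiding hu hv h.ne hs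
        exact ⟨r, hsr, hrd, hur, hvr, .inl hr⟩
      · obtain ⟨r, hsr, hrd, hvr, hur, hr⟩ := hK.exists_superset_avoiding hv hu h.ne.symm hs
        exact ⟨r, hsr, hrd, hur, hvr, .inr hr⟩
    have hrK : r ∈ K.faces := by
      rcases hr with hr | hr <;> exact mem_of_subset hr (Finset.subset_insert _ _) (hne.mono hsr)
    exact ⟨⟨mem_of_subset hrK hsr hne, hu, hv⟩, r, ⟨hrK, hur, hvr⟩, hsr, hrd,
      (h.card_filter_facets_eq_one hK hrK hur hvr hrd).2 hr⟩

theorem lk_inter_lk (h : K.IsContractible u v w) :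
    (K.lk {u}).faces ∩ (K.lk {v}).faces = (K.lk {u, v}).faces := by
  ext s
  have : s ∪ {u, v} = insert u (insert v s) := by grind
  rw [Finset.mem_inter, mem_lk, mem_lk, mem_lk, this]
  simp only [Finset.union_singleton, Finset.disjoint_singleton_right, Finset.disjoint_insert_right]
  constructor
  · rintro ⟨⟨hne, hu, hus⟩, -, hv, hvs⟩
    exact ⟨hne, ⟨hu, hv⟩, h.linkCondition s hu hv hus hvs⟩
  · rintro ⟨hne, ⟨hu, hv⟩, hs⟩
    exact ⟨⟨hne, hu, mem_of_subset hs (by grind) (by simp)⟩, hne, hv,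
      mem_of_subset hs (by grind) (by simp)⟩

theorem edgeContractionAt (h : K.IsContractible u v w) (hK : K.IsNormal d) :
    EdgeContractionAt d K u v (K.contract u v w) := by
  refine ⟨h.edge, h.ne, h.lk_inter_lk, w, h.fresh, ?_⟩
  ext s
  have notMem {x} (hs : insert x s ∈ K.faces) : w ∉ s :=
    fun hw => h.notMem hs (Finset.mem_insert_of_mem hw)
  simp only [coneFaces, Finset.mem_union, Finset.mem_image, Finset.mem_singleton,
    Finset.mem_filter, h.mem_bdryFaces_iff hK]
  by_cases hw : w ∈ s
  · have hs := h.insert_mem_contract (Finset.notMem_erase w s)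
    rw [Finset.insert_erase hw] at hs
    rw [hs]
    constructor
    · rintro hs
      rcases (s.erase w).eq_empty_or_nonempty with he | hne
      · exact .inr (.inr (by rw [← Finset.insert_erase hw, he]; rfl))
      · exact .inr (.inl (.inr ⟨s.erase w, ⟨hne, hs⟩, Finset.insert_erase hw⟩))
    · rintro (hs | ((hs | ⟨p, ⟨-, hp⟩, rfl⟩) | rfl))
      · exact absurd hw (h.notMem hs.1)
      · exact absurd hw (hs.2.2.2.elim notMem notMem)
      · have hwp : w ∉ p := by
          rcases hp.2.2 with hp | hp <;> exact fun hw => h.notMem hp (Finset.mem_insert_of_mem hw)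
        rwa [Finset.erase_insert hwp]
      · simpa using .inl (mem_of_subset h.edge (by simp) (Finset.singleton_nonempty u))
  · have subset_mem {x} (hne : s.Nonempty) (hs : insert x s ∈ K.faces) : s ∈ K.faces :=
      mem_of_subset hs (Finset.subset_insert x s) hne
    rw [mem_contract hw]
    constructor
    · rintro ⟨hu, hv, hs⟩
      exact .inl ⟨hs, hu, hv⟩
    · rintro (⟨hs, hu, hv⟩ | ((⟨hne, hu, hv, hs⟩ | ⟨p, -, rfl⟩) | rfl))
      · exact ⟨hu, hv, hs⟩
      · exact ⟨hu, hv, hs.elim (subset_mem hne) (subset_mem hne)⟩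
      · simp at hw
      · simp at hw

theorem fnum_zero_le_contract (h : K.IsContractible u v w) :
    K.fnum 0 ≤ (K.contract u v w).fnum 0 + 1 := by
  rw [fnum_zero, fnum_zero, ← Nat.sub_le_iff_le_add]
  refine Finset.pred_card_le_card_erase (a := v).trans
    (Finset.card_le_card_of_injOn (merge u v w) (fun x hx => ?_) fun x hx y hy hxy => ?_)
  · have hx := mem_linkVertices.1 (Finset.mem_of_mem_erase hx)
    exact mem_linkVertices.2 ((h.linkVertex_contract (by simp) (by simp) (by simp)).2 ⟨x, hx, rfl⟩)
  · obtain ⟨hxv, hx⟩ := Finset.mem_erase.1 hx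
    obtain ⟨hyv, hy⟩ := Finset.mem_erase.1 hy
    have hwx := h.notMem (mem_linkVertices.1 hx).2
    have hwy := h.notMem (mem_linkVertices.1 hy).2
    simp only [merge] at hxy
    grind

theorem exists_notMem_redundantEdges (h : K.IsContractible u v w)
    (hs : s ∈ (K.contract u v w).faces) (hcard : s.card = 2) :
    ∃ e ∈ K.faces, e.card = 2 ∧ e ∉ K.redundantEdges u v ∧ e.image (merge u v w) = s := by
  simp only [mem_redundantEdges]
  rcases h.mem_contract_cases hs with ⟨-, hu, hv, hs⟩ | ⟨p, rfl, hw, hu, hv, hp⟩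
  · exact ⟨s, hs, hcard, by grind, image_merge hu hv⟩
  · rw [Finset.card_insert_of_notMem hw, Nat.add_right_cancel_iff] at hcard
    by_cases hup : insert u p ∈ K.faces
    · refine ⟨_, hup, by rw [Finset.card_insert_of_notMem hu, hcard], ?_, ?_⟩
      · have := h.ne
        have : v ∉ insert u p := by grind
        grind
      · rw [Finset.image_insert, merge_left, image_merge hu hv]
    · refine ⟨_, hp.resolve_left hup, by rw [Finset.card_insert_of_notMem hv, hcard], ?_, ?_⟩
      · rintro (hup' | ⟨x, ⟨hx, hxK⟩, hpx⟩)
        · have := h.ne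
          have : u ∈ insert v p := hup' ▸ by simp
          grind
        · have hxp : x ∈ insert v p := hpx ▸ by simp
          obtain ⟨y, rfl⟩ := Finset.card_eq_one.1 hcard
          exact hup (mem_of_subset hxK (by grind) (by simp))
      · rw [Finset.image_insert, merge_right, image_merge hu hv]

theorem fnum_one_contract_add_le (h : K.IsContractible u v w) :
    (K.contract u v w).fnum 1 + (K.deg {u, v} + 1) ≤ K.fnum 1 := by
  have hC := redundantEdges_subset h.ne h.edge
  rw [← card_redundantEdges h.ne, fnum, fnum, ← Nat.le_sub_iff_add_le (Finset.card_le_card hC),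
    ← Finset.card_sdiff_of_subset hC]
  refine (Finset.card_le_card fun s hs => ?_).trans
    (Finset.card_image_le (f := Finset.image (merge u v w)))
  obtain ⟨hs, hcard⟩ := Finset.mem_filter.1 hs
  obtain ⟨e, he, hecard, heC, rfl⟩ := h.exists_notMem_redundantEdges hs hcard
  exact Finset.mem_image_of_mem _ (Finset.mem_sdiff.2 ⟨Finset.mem_filter.2 ⟨he, hecard⟩, heC⟩)

theorem g2_contract_lt (h : K.IsContractible u v w) (hdeg : 4 ≤ K.deg {u, v}) :
    (K.contract u v w).g2 < K.g2 := by
  have h₀ := h.fnum_zero_le_contract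
  have h₁ := h.fnum_one_contract_add_le
  unfold g2
  omega

end IsContractible

end Contraction

section Flip

variable {K : SComplex} {s α γ τ : Finset ℕ} {u v x y z : ℕ}

/-- The result of the bistellar move which removes the faces containing the edge `uv` and adds
the simplices `u ∗ τ` and `v ∗ τ`. -/
def flip (K : SComplex) (u v : ℕ) (τ : Finset ℕ) : SComplex where
  faces := ((K.faces.filter fun α => ¬ ({u, v} : Finset ℕ) ⊆ α) ∪
    simplexFaces (insert u τ)) ∪ simplexFaces (insert v τ)
  not_empty_mem := by simp [simplexFaces, K.not_empty_mem]
  down_closed s hs t hts ht := by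
    have := K.down_closed s
    simp only [simplexFaces, Finset.mem_union, Finset.mem_filter, Finset.mem_powerset] at hs ⊢
    grind

/-- The bistellar move `flip K u v τ` is defined: the link of the edge `uv` is the boundary of the
simplex `τ` (the case `γ = ∅` says that `uv` is an edge), and `τ` is a missing face. -/
structure IsFlippable (K : SComplex) (u v : ℕ) (τ : Finset ℕ) : Prop where
  ne : u ≠ v
  left_notMem : u ∉ τ
  right_notMem : v ∉ τ
  notMem : τ ∉ K.faces
  insert_insert_mem : ∀ γ, u ∉ γ → v ∉ γ → (insert u (insert v γ) ∈ K.faces ↔ γ ⊂ τ)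

theorem flip_comm : K.flip v u τ = K.flip u v τ := by
  simp only [flip, Finset.pair_comm v u, mk.injEq]
  exact Finset.union_right_comm _ _ _

namespace IsFlippable

theorem symm (h : K.IsFlippable u v τ) : K.IsFlippable v u τ :=
  ⟨h.ne.symm, h.right_notMem, h.left_notMem, h.notMem, fun γ hv hu => by
    rw [Finset.insert_comm, h.insert_insert_mem γ hu hv]⟩

theorem edge_mem (h : K.IsFlippable u v τ) (hτ : τ.Nonempty) : {u, v} ∈ K.faces := by
  simpa [hτ] using h.insert_insert_mem ∅

theorem erase_erase_ssubset (h : K.IsFlippable u v τ) (hα : α ∈ K.faces) (hu : u ∈ α)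
    (hv : v ∈ α) : (α.erase u).erase v ⊂ τ := by
  rw [← h.insert_insert_mem _ (by simp) (by simp)]
  convert hα using 1
  grind

theorem mem_of_subset_insert (h : K.IsFlippable u v τ) (hα : α ⊆ insert u τ) (hne : α.Nonempty)
    (hτ : ¬ τ ⊆ α) : α ∈ K.faces := by
  refine mem_of_subset ((h.insert_insert_mem (α.erase u) (by simp) ?_).2 ?_) (by grind) hne
  · have := h.ne
    have := h.right_notMem
    grind
  · have := h.left_notMem
    rw [Finset.ssubset_iff_subset_ne]
    grind

theorem mem_flip (h : K.IsFlippable u v τ) (hτ : τ.Nonempty) :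
    α ∈ (K.flip u v τ).faces ↔
      (α ∈ K.faces ∧ ¬ (u ∈ α ∧ v ∈ α)) ∨ α = τ ∨ α = insert u τ ∨ α = insert v τ := by
  have := h.ne
  have := h.left_notMem
  have := h.right_notMem
  have := h.mem_of_subset_insert (α := α)
  have := h.symm.mem_of_subset_insert (α := α)
  simp only [flip, simplexFaces, Finset.mem_union, Finset.mem_filter, Finset.mem_powerset]
  grind

theorem mem_flip_of_card_le (h : K.IsFlippable u v τ) (hτ : τ.Nonempty) (hcard : α.card ≤ τ.card) :
    α ∈ (K.flip u v τ).faces ↔ (α ∈ K.faces ∧ ¬ (u ∈ α ∧ v ∈ α)) ∨ α = τ := by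
  have hu : α ≠ insert u τ := fun hα => by
    rw [hα, Finset.card_insert_of_notMem h.left_notMem] at hcard
    omega
  have hv : α ≠ insert v τ := fun hα => by
    rw [hα, Finset.card_insert_of_notMem h.right_notMem] at hcard
    omega
  simp [h.mem_flip hτ, hu, hv]

theorem mem_of_mem_flip (h : K.IsFlippable u v τ) (hα : α ∈ (K.flip u v τ).faces)
    (hcard : α.card < τ.card) : α ∈ K.faces ∧ ¬ (u ∈ α ∧ v ∈ α) :=
  ((h.mem_flip_of_card_le (Finset.card_pos.1 (by omega)) hcard.le).1 hα).resolve_right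
    fun hα => hcard.ne (congrArg Finset.card hα)

theorem exists_superset_flip (h : K.IsFlippable u v τ) (hτ : τ.Nonempty) (hK : K.IsNormal τ.card)
    (hs : s ∈ (K.flip u v τ).faces) :
    ∃ F ∈ (K.flip u v τ).faces, s ⊆ F ∧ F.card = τ.card + 1 := by
  have hleft : insert u τ ∈ (K.flip u v τ).faces := by simp [h.mem_flip hτ]
  have hright : insert v τ ∈ (K.flip u v τ).faces := by simp [h.mem_flip hτ]
  have hleft_card := Finset.card_insert_of_notMem h.left_notMem
  have hright_card := Finset.card_insert_of_notMem h.right_notMem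
  rcases (h.mem_flip hτ).1 hs with ⟨hsK, huv⟩ | rfl | rfl | rfl
  · obtain ⟨F, hF, hsF, hcard⟩ := hK.exists_superset s hsK
    by_cases hb : u ∈ F ∧ v ∈ F
    · have hFτ := (h.erase_erase_ssubset hF hb.1 hb.2).1
      by_cases hus : u ∈ s
      · exact ⟨_, hleft, by grind, hleft_card⟩
      · exact ⟨_, hright, by grind, hright_card⟩
    · exact ⟨F, (h.mem_flip hτ).2 (.inl ⟨hF, hb⟩), hsF, hcard⟩
  · exact ⟨_, hleft, Finset.subset_insert _ _, hleft_card⟩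
  · exact ⟨_, hleft, subset_rfl, hleft_card⟩
  · exact ⟨_, hright, subset_rfl, hright_card⟩

theorem linkVertices_flip_self (h : K.IsFlippable u v τ) (hτ : τ.Nonempty) :
    (K.flip u v τ).linkVertices τ = {u, v} := by
  ext x
  have := h.left_notMem
  have := h.right_notMem
  have := h.notMem
  have hdown : insert x τ ∈ K.faces → τ ∈ K.faces :=
    fun hx => mem_of_subset hx (Finset.subset_insert x τ) hτ
  rw [mem_linkVertices, LinkVertex, h.mem_flip hτ]
  grind

/-- If `uv` lies in a face containing the ridge `s ∋ u`, then `s = u ∗ γ` with `τ = r ∗ γ`, and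
the move replaces the neighbour `v` of `s` by `r`. -/
theorem card_linkVertices_flip_of_mem (h : K.IsFlippable u v τ) (hK : K.IsNormal τ.card)
    (hcard : s.card = τ.card) (hus : u ∈ s) (hvs : v ∉ s) (hvK : insert v s ∈ K.faces) :
    ((K.flip u v τ).linkVertices s).card = 2 := by
  obtain ⟨γ, huγ, rfl⟩ : ∃ γ, u ∉ γ ∧ s = insert u γ := ⟨s.erase u, by simp, by grind⟩
  have hγτ := (h.insert_insert_mem γ huγ (by grind)).1 (Finset.insert_comm u v γ ▸ hvK)
  rw [Finset.card_insert_of_notMem huγ] at hcard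
  obtain ⟨r, hrγ, rfl⟩ := Finset.exists_eq_insert_iff.2 ⟨hγτ.1, hcard⟩
  have hu := h.left_notMem
  have hv := h.right_notMem
  have hr : r ∉ K.linkVertices (insert u γ) := fun hr => h.notMem <|
    mem_of_subset (mem_linkVertices.1 hr).2 (by grind) (by simp)
  have hflip : (K.flip u v (insert r γ)).linkVertices (insert u γ) =
      insert r ((K.linkVertices (insert u γ)).erase v) := by
    ext x
    have := h.ne
    simp only [Finset.mem_insert, Finset.mem_erase, mem_linkVertices, LinkVertex,
      h.mem_flip (Finset.insert_nonempty r γ), Finset.ext_iff (s₁ := insert _ _)]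
    grind
  have hmem : v ∈ K.linkVertices (insert u γ) := mem_linkVertices.2 ⟨hvs, hvK⟩
  rw [hflip, Finset.card_insert_of_notMem (by grind), Finset.card_erase_of_mem hmem,
    hK.card_linkVertices _ (mem_of_subset hvK (by grind) (by simp))
      (by rw [Finset.card_insert_of_notMem huγ, hcard])]

theorem insert_ne_insert (h : K.IsFlippable u v τ) (hsτ : s ≠ τ)
    (huv : ¬ (u ∈ s ∧ insert v s ∈ K.faces)) (hx : x ∉ s) : insert x s ≠ insert u τ := by
  intro heq
  have hu := h.left_notMem
  have hv := h.right_notMem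
  have hus : u ∈ s := by
    by_contra hus
    have hxu : u = x := (Finset.mem_insert.1 (heq ▸ Finset.mem_insert_self u τ)).resolve_right hus
    apply hsτ
    rw [← Finset.erase_insert hx, heq, ← hxu, Finset.erase_insert hu]
  refine huv ⟨hus, ?_⟩
  have hsub : s.erase u ⊂ τ := by
    have hxu : x ≠ u := fun hxu => hx (hxu ▸ hus)
    rw [← Finset.erase_insert hu, ← heq, Finset.erase_insert_of_ne hxu]
    exact Finset.ssubset_insert (by grind)
  have := (h.insert_insert_mem (s.erase u) (by simp) (fun hvs => hv (hsub.1 hvs))).2 hsub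
  convert this using 1
  grind

theorem card_linkVertices_flip (h : K.IsFlippable u v τ) (hτ : τ.Nonempty)
    (hK : K.IsNormal τ.card) (hs : s ∈ (K.flip u v τ).faces) (hcard : s.card = τ.card) :
    ((K.flip u v τ).linkVertices s).card = 2 := by
  by_cases hsτ : s = τ
  · rw [hsτ, h.linkVertices_flip_self hτ, Finset.card_pair h.ne]
  obtain ⟨hsK, huv⟩ := ((h.mem_flip_of_card_le hτ hcard.le).1 hs).resolve_right hsτ
  by_cases hu : u ∈ s ∧ insert v s ∈ K.faces
  · exact h.card_linkVertices_flip_of_mem hK hcard hu.1 (fun hv => huv ⟨hu.1, hv⟩) hu.2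
  by_cases hv : v ∈ s ∧ insert u s ∈ K.faces
  · rw [← flip_comm]
    exact h.symm.card_linkVertices_flip_of_mem hK hcard hv.1 (fun hu => huv ⟨hu, hv.1⟩) hv.2
  suffices (K.flip u v τ).linkVertices s = K.linkVertices s by
    rw [this, hK.card_linkVertices s hsK hcard]
  ext x
  have := h.insert_ne_insert hsτ hu (x := x)
  have := h.symm.insert_ne_insert hsτ hv (x := x)
  have := h.ne
  have : x ∉ s → insert x s ≠ τ := fun hx heq => by
    rw [← heq, Finset.card_insert_of_notMem hx] at hcard
    omega
  rw [mem_linkVertices, mem_linkVertices, LinkVertex, LinkVertex, h.mem_flip hτ]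
  grind

theorem linkConnected_flip_of_mem (h : K.IsFlippable u v τ) (hK : K.IsNormal τ.card)
    (hcard : s.card < τ.card) (hus : u ∈ s) (hvs : v ∉ s) : (K.flip u v τ).LinkConnected s := by
  have hτ : τ.Nonempty := Finset.card_pos.1 (by omega)
  have hold {y} (hy : (K.flip u v τ).LinkVertex s y) : K.LinkVertex s y ∧ y ≠ v := by
    rcases (h.mem_flip_of_card_le hτ (by rwa [Finset.card_insert_of_notMem hy.1])).1 hy.2 with
      ⟨hyK, hyv⟩ | rfl
    · exact ⟨⟨hy.1, hyK⟩, by grind⟩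
    · exact absurd (Finset.mem_insert_of_mem hus) h.left_notMem
  intro y z hy hz
  refine ReflTransGen.mono (fun a b hab => ?_) _ _
    (hK.reflTransGen_avoiding hcard (hold hy).1 (hold hy).2 (hold hz).1 (hold hz).2)
  exact ⟨hab.1.1, hab.1.2.1, (h.mem_flip hτ).2 (.inl ⟨hab.1.2.2, by grind⟩)⟩

theorem linkAdj_flip_of_subset (h : K.IsFlippable u v τ) (hus : u ∉ s) (hsτ : s ⊆ τ) (hx : x ∈ τ)
    (hxs : x ∉ s) : (K.flip u v τ).LinkAdj s u x := by
  refine ⟨hus, hxs, mem_of_subset (s := insert u τ) ?_ (by grind) (by simp)⟩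
  exact (h.mem_flip ⟨x, hx⟩).2 (.inr (.inr (.inl rfl)))

theorem linkConnected_flip_of_notMem (h : K.IsFlippable u v τ) (hK : K.IsNormal τ.card)
    (hs : s = ∅ ∨ s ∈ K.faces) (hcard : s.card < τ.card) (hus : u ∉ s) (hvs : v ∉ s) :
    (K.flip u v τ).LinkConnected s := by
  have hτ : τ.Nonempty := Finset.card_pos.1 (by omega)
  have exists_old {y} (hy : (K.flip u v τ).LinkVertex s y) :
      ∃ a, K.LinkVertex s a ∧ ReflTransGen ((K.flip u v τ).LinkAdj s) y a := by
    rcases (h.mem_flip_of_card_le hτ (by rwa [Finset.card_insert_of_notMem hy.1])).1 hy.2 with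
      ⟨hyK, -⟩ | rfl
    · exact ⟨y, ⟨hy.1, hyK⟩, .refl⟩
    · have hadj := h.linkAdj_flip_of_subset hus (Finset.subset_insert y s)
        (Finset.mem_insert_self y s) hy.1
      exact ⟨u, ⟨hus, mem_of_subset ((h.insert_insert_mem s hus hvs).2 (Finset.ssubset_insert hy.1))
        (by grind) (by simp)⟩, .single hadj.symm⟩
  have edge_detour (huv : insert u (insert v s) ∈ K.faces) :
      ReflTransGen ((K.flip u v τ).LinkAdj s) u v := by
    have hsτ := (h.insert_insert_mem s hus hvs).1 huv
    obtain ⟨r, hrτ, hrs⟩ := Finset.exists_of_ssubset hsτ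
    have hvr := h.symm.linkAdj_flip_of_subset hvs hsτ.1 hrτ hrs
    rw [flip_comm] at hvr
    exact .tail (.single (h.linkAdj_flip_of_subset hus hsτ.1 hrτ hrs)) hvr.symm
  intro y z hy hz
  obtain ⟨a, ha, hya⟩ := exists_old hy
  obtain ⟨b, hb, hzb⟩ := exists_old hz
  refine (hya.trans (ReflTransGen.lift' id (fun c d hcd => ?_) _ _
    (hK.linkConnected s hs hcard a b ha hb))).trans (symm_of _ hzb)
  by_cases huv : u ∈ insert c (insert d s) ∧ v ∈ insert c (insert d s)
  · have hne := h.ne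
    rcases (by grind : c = u ∧ d = v ∨ c = v ∧ d = u) with ⟨rfl, rfl⟩ | ⟨rfl, rfl⟩
    · exact edge_detour hcd.2.2
    · exact symm_of _ (edge_detour hcd.symm.2.2)
  · exact .single ⟨hcd.1, hcd.2.1, (h.mem_flip hτ).2 (.inl ⟨hcd.2.2, huv⟩)⟩

theorem linkConnected_flip (h : K.IsFlippable u v τ) (hK : K.IsNormal τ.card)
    (hs : s = ∅ ∨ s ∈ (K.flip u v τ).faces) (hcard : s.card < τ.card) :
    (K.flip u v τ).LinkConnected s := by
  have huv : ¬ (u ∈ s ∧ v ∈ s) := by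
    rcases hs with rfl | hs
    · simp
    · exact (h.mem_of_mem_flip hs hcard).2
  by_cases hus : u ∈ s
  · exact h.linkConnected_flip_of_mem hK hcard hus fun hvs => huv ⟨hus, hvs⟩
  by_cases hvs : v ∈ s
  · rw [← flip_comm]
    exact h.symm.linkConnected_flip_of_mem hK hcard hvs hus
  · exact h.linkConnected_flip_of_notMem hK
      (hs.imp_right fun hs => (h.mem_of_mem_flip hs hcard).1) hcard hus hvs

theorem isNormal_flip (h : K.IsFlippable u v τ) (hτ : τ.Nonempty) (hK : K.IsNormal τ.card) :
    (K.flip u v τ).IsNormal τ.card where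
  nonempty := ⟨τ, (h.mem_flip hτ).2 (.inr (.inl rfl))⟩
  card_le s hs := by
    have hu := Finset.card_insert_of_notMem h.left_notMem
    have hv := Finset.card_insert_of_notMem h.right_notMem
    rcases (h.mem_flip hτ).1 hs with hs | rfl | rfl | rfl
    · exact hK.card_le s hs.1
    all_goals omega
  exists_superset _ := h.exists_superset_flip hτ hK
  card_linkVertices _ := h.card_linkVertices_flip hτ hK
  linkConnected _ := h.linkConnected_flip hK

theorem g2_flip_lt (h : K.IsFlippable u v τ) (hτ : 2 < τ.card) : (K.flip u v τ).g2 < K.g2 := by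
  have hne : τ.Nonempty := Finset.card_pos.1 (by omega)
  have fnum_zero_le : K.fnum 0 ≤ (K.flip u v τ).fnum 0 := by
    refine Finset.card_le_card fun s hs => ?_
    rw [Finset.mem_filter, h.mem_flip hne] at *
    refine ⟨.inl ⟨hs.1, fun huv => h.ne ?_⟩, hs.2⟩
    exact Finset.card_le_one.1 hs.2.le u huv.1 v huv.2
  have fnum_one_lt : (K.flip u v τ).fnum 1 < K.fnum 1 := by
    refine Finset.card_lt_card ((Finset.ssubset_iff_of_subset fun s hs => ?_).2 ⟨{u, v}, ?_, ?_⟩)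
    · rw [Finset.mem_filter] at *
      exact ⟨(h.mem_of_mem_flip hs.1 (by omega)).1, hs.2⟩
    · exact Finset.mem_filter.2 ⟨h.edge_mem hne, Finset.card_pair h.ne⟩
    · intro huv
      rw [Finset.mem_filter] at huv
      exact (h.mem_of_mem_flip huv.1 (by omega)).2 (by simp)
  unfold g2
  omega

theorem lk_eq_properFaces (h : K.IsFlippable u v τ) : (K.lk {u, v}).faces = properFaces τ := by
  ext γ
  have hu := h.left_notMem
  have hv := h.right_notMem
  have := h.insert_insert_mem γ
  have huv : γ ∪ {u, v} = insert u (insert v γ) := by grind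
  simp only [mem_lk, mem_properFaces, huv, Finset.disjoint_left]
  grind

theorem bistellarTwoMove (h : K.IsFlippable u v τ) (hτ : τ.card = 3) :
    BistellarTwoMove K (K.flip u v τ) := by
  obtain ⟨a, b, c, -, -, -, rfl⟩ := Finset.card_eq_three.1 hτ
  exact ⟨u, v, a, b, c, h.edge_mem (by simp), h.ne, hτ, h.left_notMem, h.right_notMem,
    h.lk_eq_properFaces, h.notMem, rfl⟩

end IsFlippable

end Flip

section Realization

variable {F G : Set (Finset ℕ)} {s s' T : Finset ℕ} {w : ℕ → ℝ} {a b c : ℕ}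

/-- The union of the closed simplices spanned by the members of `F`, in barycentric coordinates.
For the faces of a complex `K` this is `K.realSpace`, but `F` may also consist of the facets
only. -/
def realization (F : Set (Finset ℕ)) : Set (ℕ → ℝ) :=
  {w | (∀ v, 0 ≤ w v) ∧ ∃ s ∈ F, (∀ v, w v ≠ 0 → v ∈ s) ∧ ∑ v ∈ s, w v = 1}

theorem sum_eq_sum_of_support_subset (hw : ∀ v, w v ≠ 0 → v ∈ s) (hsT : s ⊆ T) :
    ∑ v ∈ s, w v = ∑ v ∈ T, w v :=
  Finset.sum_subset hsT fun v _ hv => by_contra fun h => hv (hw v h)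

theorem realization_mono (h : ∀ s ∈ F, ∃ t ∈ G, s ⊆ t) : realization F ⊆ realization G := by
  rintro w ⟨hw, s, hs, hws, hsum⟩
  obtain ⟨t, ht, hst⟩ := h s hs
  exact ⟨hw, t, ht, fun v hv => hst (hws v hv), sum_eq_sum_of_support_subset hws hst ▸ hsum⟩

theorem mem_realization_properFaces :
    w ∈ realization (properFaces s) ↔
      (∀ v, 0 ≤ w v) ∧ (∀ v, w v ≠ 0 → v ∈ s) ∧ ∑ v ∈ s, w v = 1 ∧ ∃ v ∈ s, w v = 0 := by
  constructor
  · rintro ⟨hw, t, ht, hwt, hsum⟩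
    have hts := (mem_properFaces.1 ht).2.subset
    obtain ⟨v, hvs, hvt⟩ := Finset.exists_of_ssubset (mem_properFaces.1 ht).2
    exact ⟨hw, fun v hv => hts (hwt v hv), sum_eq_sum_of_support_subset hwt hts ▸ hsum,
      v, hvs, by_contra fun h => hvt (hwt v h)⟩
  · rintro ⟨hw, hws, hsum, v, hvs, hv⟩
    have hwt : ∀ x, w x ≠ 0 → x ∈ s.erase v := fun x hx =>
      Finset.mem_erase.2 ⟨fun h => hx (h ▸ hv), hws x hx⟩
    have hsum' := sum_eq_sum_of_support_subset hwt (s.erase_subset v)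
    refine ⟨hw, s.erase v, ?_, hwt, hsum' ▸ hsum⟩
    refine mem_properFaces.2 ⟨Finset.nonempty_iff_ne_empty.2 fun h => ?_, Finset.erase_ssubset hvs⟩
    simp [← hsum', h] at hsum

section Simplex

variable {E : Type*} [NormedAddCommGroup E] [NormedSpace ℝ E]

theorem coord_sum_smul {ι : Type*} [Fintype ι] (B : AffineBasis ι ℝ E) {w : ι → ℝ}
    (hw : ∑ i, w i = 1) (i : ι) : B.coord i (∑ j, w j • B j) = w i := by
  rw [← Finset.univ.affineCombination_eq_linear_combination _ w hw,
    B.coord_apply_combination_of_mem (Finset.mem_univ i) hw]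

theorem mem_frontier_convexHull_range {ι : Type*} [Finite ι] (B : AffineBasis ι ℝ E) {x : E} :
    x ∈ frontier (convexHull ℝ (Set.range B)) ↔
      (∀ i, 0 ≤ B.coord i x) ∧ ∃ i, B.coord i x = 0 := by
  have hclosed : IsClosed (convexHull ℝ (Set.range B)) :=
    (Set.finite_range B).isClosed_convexHull ℝ
  rw [hclosed.frontier_eq, B.interior_convexHull, B.convexHull_eq_nonneg_coord]
  simp only [Set.mem_sdiff, Set.mem_ofPred_eq, not_forall, not_lt]
  exact and_congr_right fun h => exists_congr fun i => (h i).ge_iff_eq'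

variable [FiniteDimensional ℝ E]

/-- An affine basis indexed by `s` maps the boundary of the simplex on `s` onto the frontier of
the convex hull of the basis. -/
noncomputable def boundaryHomeomorph (B : AffineBasis s ℝ E) :
    realization (properFaces s) ≃ₜ frontier (convexHull ℝ (Set.range B)) where
  toFun w := ⟨∑ i : s, w.1 i • B i, by
    obtain ⟨hw, -, hsum, v, hvs, hv⟩ := mem_realization_properFaces.1 w.2
    have hcoord := coord_sum_smul B ((s.sum_coe_sort w.1).trans hsum)
    exact (mem_frontier_convexHull_range B).2
      ⟨fun i => hcoord i ▸ hw i, ⟨v, hvs⟩, (hcoord ⟨v, hvs⟩).trans hv⟩⟩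
  invFun x := ⟨fun v => if hv : v ∈ s then B.coord ⟨v, hv⟩ x else 0, by
    obtain ⟨hnonneg, v, hv⟩ := (mem_frontier_convexHull_range B).1 x.2
    refine mem_realization_properFaces.2 ⟨fun v => ?_, fun v hv => ?_, ?_, v, v.2, ?_⟩
    · split_ifs
      exacts [hnonneg _, le_rfl]
    · by_contra hvs
      simp [hvs] at hv
    · rw [← s.sum_coe_sort]
      simpa using B.sum_coord_apply_eq_one x.1
    · simp [hv]⟩
  left_inv w := by
    obtain ⟨-, hws, hsum, -⟩ := mem_realization_properFaces.1 w.2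
    ext v
    by_cases hv : v ∈ s
    · simpa [hv] using coord_sum_smul B ((s.sum_coe_sort w.1).trans hsum) ⟨v, hv⟩
    · simpa [hv] using (by_contra fun h => hv (hws v (Ne.symm h)) : 0 = w.1 v)
  right_inv x := by
    ext
    simpa using B.linear_combination_coord_eq_self x.1
  continuous_toFun := by
    refine (continuous_finsetSum _ fun i _ => Continuous.smul ?_ continuous_const).subtype_mk _
    exact (continuous_apply (i : ℕ)).comp continuous_subtype_val
  continuous_invFun := by
    refine Continuous.subtype_mk (continuous_pi fun v => ?_) _
    split_ifs
    · exact (continuous_barycentric_coord B _).comp continuous_subtype_val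
    · exact continuous_const

theorem nonempty_homeomorph_sphere_of_card_eq (hs : s.card = Module.finrank ℝ E + 1) :
    Nonempty (realization (properFaces s) ≃ₜ Metric.sphere (0 : E) 1) := by
  obtain ⟨B⟩ := AffineBasis.exists_affineBasis_of_finiteDimensional (k := ℝ) (P := E) (ι := s)
    (by simpa using hs)
  obtain ⟨e, -, -, he⟩ := exists_homeomorph_image_interior_closure_frontier_eq_unitBall
    (convex_convexHull ℝ (Set.range B)) (interior_convexHull_nonempty_iff_affineSpan_eq_top.2 B.tot)
    (isBounded_convexHull.2 (Set.finite_range B).isBounded)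
  exact ⟨((boundaryHomeomorph B).trans (e.image _)).trans (Homeomorph.setCongr he)⟩

end Simplex

/-- Subdivision of the edge `ac` at the new vertex `b`: every member of `F` which contains the
edge is cut into two. -/
def subdivideEdge (F : Set (Finset ℕ)) (a b c : ℕ) : Set (Finset ℕ) :=
  {s | s ∈ F ∧ ¬ (a ∈ s ∧ c ∈ s)} ∪
    {s | ∃ r ∈ F, a ∈ r ∧ c ∈ r ∧ (s = insert b (r.erase a) ∨ s = insert b (r.erase c))}

/-- The displacement from the vertex `b` to the midpoint of the edge `ac`. -/
noncomputable def midpointShift (a b c : ℕ) : ℕ → ℝ :=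
  Pi.single a (1 / 2) + Pi.single c (1 / 2) - Pi.single b 1

theorem sum_add_smul_midpointShift {k : ℝ} (hw : ∀ v, w v ≠ 0 → v ∈ s) (hsT : s ⊆ T)
    (hw' : ∀ v, (w + k • midpointShift a b c) v ≠ 0 → v ∈ s') (hsT' : s' ⊆ T)
    (ha : a ∈ T) (hb : b ∈ T) (hc : c ∈ T) :
    ∑ v ∈ s', (w + k • midpointShift a b c) v = ∑ v ∈ s, w v := by
  have hshift : ∑ v ∈ T, midpointShift a b c v = 0 := by
    simp [midpointShift, Finset.sum_add_distrib, Finset.sum_sub_distrib, ha, hb, hc]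
    norm_num
  rw [sum_eq_sum_of_support_subset hw' hsT', sum_eq_sum_of_support_subset hw hsT]
  simp [Finset.sum_add_distrib, ← Finset.mul_sum, hshift]

section Subdivision

variable (hac : a ≠ c) (hab : a ≠ b) (hbc : b ≠ c)
include hac hab hbc

theorem add_smul_midpointShift_apply (k : ℝ) (v : ℕ) :
    (w + k • midpointShift a b c) v =
      if v = a then w a + k / 2 else if v = c then w c + k / 2 else
      if v = b then w b - k else w v := by
  simp only [midpointShift, Pi.add_apply, Pi.smul_apply, Pi.sub_apply, Pi.single_apply,
    smul_eq_mul]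
  split_ifs <;> subst_vars <;> first | contradiction | ring

theorem push_mem_realization (hb : ∀ s ∈ F, b ∉ s) (hw : w ∈ realization (subdivideEdge F a b c)) :
    w + w b • midpointShift a b c ∈ realization F := by
  obtain ⟨hw, s, hs, hws, hsum⟩ := hw
  have happly := add_smul_midpointShift_apply (w := w) hac hab hbc (w b)
  refine ⟨fun v => ?_, ?_⟩
  · rw [happly]
    have := hw a; have := hw b; have := hw c; have := hw v
    split_ifs <;> linarith
  rcases hs with ⟨hs, -⟩ | ⟨r, hr, ha, hc, hs⟩
  · have : w b = 0 := by_contra fun h => hb s hs (hws b h)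
    exact ⟨s, hs, by simpa [this] using hws, by simpa [this] using hsum⟩
  · have hsT : s ⊆ insert b r := by grind
    have hws' : ∀ v, (w + w b • midpointShift a b c) v ≠ 0 → v ∈ r := fun v hv => by
      rw [happly] at hv
      grind
    exact ⟨r, hr, hws', (sum_add_smul_midpointShift hws hsT hws' (by grind) (by grind) (by grind)
      (by grind)).trans hsum⟩

theorem pull_mem_realization (hw : w ∈ realization F) :
    w + (-(2 * min (w a) (w c))) • midpointShift a b c ∈
      realization (subdivideEdge F a b c) := by
  obtain ⟨hw, s, hs, hws, hsum⟩ := hw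
  have happly := add_smul_midpointShift_apply (w := w) hac hab hbc (-(2 * min (w a) (w c)))
  refine ⟨fun v => ?_, ?_⟩
  · rw [happly]
    have := hw a; have := hw b; have := hw c; have := hw v
    grind
  by_cases hacs : a ∈ s ∧ c ∈ s
  · obtain ⟨x, hx, hmin⟩ : ∃ x, (x = a ∨ x = c) ∧ w x = min (w a) (w c) := by grind
    have hws' : ∀ v, (w + (-(2 * min (w a) (w c))) • midpointShift a b c) v ≠ 0 →
        v ∈ insert b (s.erase x) := fun v hv => by
      rw [happly] at hv
      grind
    refine ⟨insert b (s.erase x), .inr ⟨s, hs, hacs.1, hacs.2, by grind⟩, hws',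
      (sum_add_smul_midpointShift hws (Finset.subset_insert b s) hws' (by grind) (by grind)
      (by grind) (by grind)).trans hsum⟩
  · have hmin : min (w a) (w c) = 0 := by grind
    exact ⟨s, .inl ⟨hs, hacs⟩, by simpa [hmin] using hws, by simpa [hmin] using hsum⟩

omit hac in
theorem min_eq_zero_of_mem_realization_subdivideEdge
    (hw : w ∈ realization (subdivideEdge F a b c)) : min (w a) (w c) = 0 := by
  obtain ⟨hw, s, hs, hws, -⟩ := hw
  have : a ∉ s ∨ c ∉ s := by
    rcases hs with ⟨-, hs⟩ | ⟨r, -, -, -, rfl | rfl⟩ <;> grind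
  grind

/-- Subdividing an edge at its midpoint does not change the underlying space. -/
noncomputable def subdivideEdgeHomeomorph (hb : ∀ s ∈ F, b ∉ s) :
    realization (subdivideEdge F a b c) ≃ₜ realization F where
  toFun w := ⟨_, push_mem_realization hac hab hbc hb w.2⟩
  invFun w := ⟨_, pull_mem_realization hac hab hbc w.2⟩
  left_inv w := by
    have hmin := min_eq_zero_of_mem_realization_subdivideEdge hab hbc w.2
    ext v
    simp only [add_smul_midpointShift_apply hac hab hbc]
    grind
  right_inv w := by
    obtain ⟨-, s, hs, hws, -⟩ := w.2
    have : w.1 b = 0 := by_contra fun h => hb s hs (hws b h)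
    ext v
    simp only [add_smul_midpointShift_apply hac hab hbc]
    grind
  continuous_toFun := by
    have hcoord (v : ℕ) : Continuous fun w : realization (subdivideEdge F a b c) => w.1 v :=
      (continuous_apply v).comp continuous_subtype_val
    exact (continuous_subtype_val.add ((hcoord b).smul continuous_const)).subtype_mk _
  continuous_invFun := by
    have hcoord (v : ℕ) : Continuous fun w : realization F => w.1 v :=
      (continuous_apply v).comp continuous_subtype_val
    have hfactor := ((continuous_const (y := (2 : ℝ))).mul ((hcoord a).min (hcoord c))).neg
    exact (continuous_subtype_val.add (hfactor.smul continuous_const)).subtype_mk _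

end Subdivision

section Bipyramid

/-- The facets of the suspension, with apexes `p` and `q`, of the polygon `a 0, …, a m`. -/
def bipyramid (p q : ℕ) (a : ℕ → ℕ) (m : ℕ) : Set (Finset ℕ) :=
  {s | ∃ x, (x = p ∨ x = q) ∧ ((∃ i < m, s = {x, a i, a (i + 1)}) ∨ s = {x, a m, a 0})}

variable {p q : ℕ} {a : ℕ → ℕ} {m : ℕ}

theorem realization_bipyramid_two (hpq : p ≠ q) (ha : Set.InjOn a (Set.Iic 2))
    (hap : ∀ i ≤ 2, a i ≠ p) (haq : ∀ i ≤ 2, a i ≠ q) : realization (bipyramid p q a 2) =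
      realization (subdivideEdge (properFaces {p, q, a 0, a 1}) p (a 2) q) := by
  have h01 : a 0 ≠ a 1 := ha.ne (by simp) (by simp) (by simp)
  have h02 : a 0 ≠ a 2 := ha.ne (by simp) (by simp) (by simp)
  have h12 : a 1 ≠ a 2 := ha.ne (by simp) (by simp) (by simp)
  have := hap 0 (by simp); have := hap 1 (by simp); have := hap 2 (by simp)
  have := haq 0 (by simp); have := haq 1 (by simp); have := haq 2 (by simp)
  have hface : ∀ s v y, v ∈ ({p, q, a 0, a 1} : Finset ℕ) → v ∉ s → y ∈ s →
      s ⊆ {p, q, a 0, a 1} → s ∈ properFaces {p, q, a 0, a 1} := fun s v y hv hvs hy hs =>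
    mem_properFaces.2 ⟨⟨y, hy⟩, hs.ssubset_of_mem_notMem hv hvs⟩
  refine Set.Subset.antisymm (realization_mono ?_) (realization_mono ?_)
  · rintro s ⟨x, hx, ⟨i, hi, rfl⟩ | rfl⟩
    · interval_cases i
      · refine ⟨{x, a 0, a 1}, .inl ⟨hface _ (if x = p then q else p) (a 0) ?_ ?_ ?_ ?_, ?_⟩,
          subset_rfl⟩ <;> grind
      · refine ⟨{x, a 1, a 2}, .inr ⟨{p, q, a 1}, hface _ (a 0) (a 1) ?_ ?_ ?_ ?_, ?_⟩,
          subset_rfl⟩ <;> grind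
    · refine ⟨{x, a 2, a 0}, .inr ⟨{p, q, a 0}, hface _ (a 1) (a 0) ?_ ?_ ?_ ?_, ?_⟩,
        subset_rfl⟩ <;> grind
  · rintro s (⟨hs, hpqs⟩ | ⟨r, hr, hp, hq, hs⟩)
    · have hs := (mem_properFaces.1 hs).2.subset
      obtain ⟨x, hx, hxs⟩ : ∃ x, (x = p ∨ x = q) ∧ s ⊆ {x, a 0, a 1} :=
        ⟨if p ∈ s then p else q, by grind⟩
      exact ⟨_, ⟨x, hx, .inl ⟨0, by simp, rfl⟩⟩, hxs⟩
    · have hr' := (mem_properFaces.1 hr).2.subset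
      obtain ⟨v, hv, hvr⟩ := Finset.exists_of_ssubset (mem_properFaces.1 hr).2
      obtain ⟨x, hx, hxs⟩ : ∃ x, (x = p ∨ x = q) ∧ (s ⊆ {x, a 1, a 2} ∨ s ⊆ {x, a 2, a 0}) :=
        ⟨if p ∈ s then p else q, by grind⟩
      exact hxs.elim (⟨_, ⟨x, hx, .inl ⟨1, by simp, rfl⟩⟩, ·⟩) (⟨_, ⟨x, hx, .inr rfl⟩, ·⟩)

theorem bipyramid_succ (hm : 2 ≤ m) (ha : Set.InjOn a (Set.Iic m)) (hap : ∀ i ≤ m, a i ≠ p)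
    (haq : ∀ i ≤ m, a i ≠ q) :
    bipyramid p q a (m + 1) = subdivideEdge (bipyramid p q a m) (a m) (a (m + 1)) (a 0) := by
  have hinj : ∀ i ≤ m, ∀ j ≤ m, a i = a j → i = j := fun i hi j hj => ha hi hj
  have hedge : ∀ x i, (x = p ∨ x = q) → i < m →
      ¬(a m ∈ ({x, a i, a (i + 1)} : Finset ℕ) ∧ a 0 ∈ ({x, a i, a (i + 1)} : Finset ℕ)) := by
    rintro x i hx hi ⟨h₁, h₂⟩
    grind
  have h0m : a 0 ≠ a m := fun h => by have := hinj _ (by simp) _ le_rfl h; omega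
  ext s
  constructor
  · rintro ⟨x, hx, ⟨i, hi, rfl⟩ | rfl⟩
    · rcases (Nat.lt_succ_iff_lt_or_eq.1 hi) with hi | rfl
      · exact .inl ⟨⟨x, hx, .inl ⟨i, hi, rfl⟩⟩, hedge x i hx hi⟩
      · exact .inr ⟨_, ⟨x, hx, .inr rfl⟩, by grind⟩
    · exact .inr ⟨_, ⟨x, hx, .inr rfl⟩, by grind⟩
  · rintro (⟨⟨x, hx, ⟨i, hi, rfl⟩ | rfl⟩, hs⟩ | ⟨r, ⟨x, hx, ⟨i, hi, rfl⟩ | rfl⟩, ham, ha0, hs⟩)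
    · exact ⟨x, hx, .inl ⟨i, by omega, rfl⟩⟩
    · simp at hs
    · exact absurd ⟨ham, ha0⟩ (hedge x i hx hi)
    · rcases hs with rfl | rfl
      · exact ⟨x, hx, .inr (by grind)⟩
      · exact ⟨x, hx, .inl ⟨m, by omega, by grind⟩⟩

theorem nonempty_homeomorph_sphere_bipyramid (hm : 2 ≤ m) (hpq : p ≠ q)
    (ha : Set.InjOn a (Set.Iic m)) (hap : ∀ i ≤ m, a i ≠ p) (haq : ∀ i ≤ m, a i ≠ q) :
    Nonempty (realization (bipyramid p q a m) ≃ₜ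
      Metric.sphere (0 : EuclideanSpace ℝ (Fin 3)) 1) := by
  induction m, hm using Nat.le_induction with
  | base =>
    have hcard : ({p, q, a 0, a 1} : Finset ℕ).card = 4 := by
      have : a 0 ≠ a 1 := ha.ne (by simp) (by simp) (by simp)
      have := hap 0; have := hap 1; have := haq 0; have := haq 1
      grind
    obtain ⟨e⟩ := nonempty_homeomorph_sphere_of_card_eq (E := EuclideanSpace ℝ (Fin 3))
      (s := {p, q, a 0, a 1}) (by simp [hcard])
    rw [realization_bipyramid_two hpq ha hap haq]
    refine ⟨(subdivideEdgeHomeomorph hpq (hap 2 le_rfl).symm (haq 2 le_rfl)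
      fun s hs h2s => ?_).trans e⟩
    have h02 : a 0 ≠ a 2 := ha.ne (by simp) (by simp) (by simp)
    have h12 : a 1 ≠ a 2 := ha.ne (by simp) (by simp) (by simp)
    have := hap 2; have := haq 2; have := (mem_properFaces.1 hs).2.subset h2s
    grind
  | succ m hm ih =>
    have ham := fun i (hi : i ≤ m) => hap i (by omega)
    have hqm := fun i (hi : i ≤ m) => haq i (by omega)
    have ha' : Set.InjOn a (Set.Iic m) := ha.mono (Set.Iic_subset_Iic.2 m.le_succ)
    obtain ⟨e⟩ := ih ha' ham hqm
    rw [bipyramid_succ hm ha' ham hqm]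
    have hne : ∀ i ≤ m, a i ≠ a (m + 1) := fun i hi =>
      ha.ne (Set.mem_Iic.2 (by omega)) (Set.mem_Iic.2 le_rfl) (by omega)
    refine ⟨(subdivideEdgeHomeomorph (ha.ne ?_ ?_ (by omega)) (hne m le_rfl)
      (hne 0 (by omega)).symm ?_).trans e⟩
    · simp
    · simp
    · rintro s ⟨x, hx, ⟨i, hi, rfl⟩ | rfl⟩ <;> grind

end Bipyramid

end Realization

section Surface

variable {L : SComplex} {a p q u w x y z n : ℕ}

/-- `{x, y, z}` is a 2-dimensional face of `L`. -/
def IsTriangle (L : SComplex) (x y z : ℕ) : Prop :=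
  x ≠ y ∧ y ≠ z ∧ x ≠ z ∧ {x, y, z} ∈ L.faces

namespace IsTriangle

theorem swap_left (h : L.IsTriangle x y z) : L.IsTriangle y x z :=
  ⟨h.1.symm, h.2.2.1, h.2.1, Finset.insert_comm x y {z} ▸ h.2.2.2⟩

theorem swap_right (h : L.IsTriangle x y z) : L.IsTriangle x z y :=
  ⟨h.2.2.1, h.2.1.symm, h.1, Finset.pair_comm y z ▸ h.2.2.2⟩

theorem rotate (h : L.IsTriangle x y z) : L.IsTriangle y z x := h.swap_left.swap_right

theorem edge (h : L.IsTriangle x y z) : {x, y} ∈ L.faces :=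
  mem_of_subset h.2.2.2 (by grind) (by simp)

theorem left_mem (h : L.IsTriangle x y z) : {x} ∈ L.faces :=
  mem_of_subset h.2.2.2 (by simp) (by simp)

theorem linkVertex (h : L.IsTriangle x y z) : L.LinkVertex {x} y :=
  ⟨by simpa using h.1.symm, Finset.pair_comm x y ▸ h.edge⟩

theorem exists_eq_of_mem (h : L.IsTriangle x y z) (hw : w ∈ ({x, y, z} : Finset ℕ)) :
    ∃ u v, L.IsTriangle w u v ∧ ({x, y, z} : Finset ℕ) = {w, u, v} := by
  simp only [Finset.mem_insert, Finset.mem_singleton] at hw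
  rcases hw with rfl | rfl | rfl
  · exact ⟨y, z, h, rfl⟩
  · exact ⟨x, z, h.swap_left, Finset.insert_comm x w {z}⟩
  · exact ⟨x, y, h.rotate.rotate, by grind⟩

end IsTriangle

theorem linkVertex_pair (hxy : x ≠ y) : L.LinkVertex {x, y} z ↔ L.IsTriangle x y z := by
  simp only [LinkVertex, IsTriangle, Finset.insert_comm z x, Finset.pair_comm z y]
  grind

theorem linkVertex_singleton : L.LinkVertex {x} y ↔ x ≠ y ∧ {x, y} ∈ L.faces := by
  simp [LinkVertex, Finset.pair_comm, eq_comm]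

theorem isTriangle_of_linkAdj (h : L.LinkAdj {a} y z) (hyz : y ≠ z) : L.IsTriangle a y z := by
  obtain ⟨hy, hz, hmem⟩ := h
  rw [Finset.mem_singleton] at hy hz
  exact ⟨Ne.symm hy, hyz, Ne.symm hz, by rwa [Finset.insert_comm a, Finset.pair_comm a]⟩

namespace IsNormal

theorem exists_isTriangle_ne (hL : L.IsNormal 2) (h : L.IsTriangle x y z) :
    ∃ w, L.IsTriangle x y w ∧ w ≠ z := by
  have hcard := hL.card_linkVertices {x, y} h.edge (Finset.card_pair h.1)
  obtain ⟨w, hw, hwz⟩ := Finset.exists_mem_ne (hcard ▸ one_lt_two) z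
  exact ⟨w, (linkVertex_pair h.1).1 (mem_linkVertices.1 hw), hwz⟩

theorem eq_or_eq_of_isTriangle (hL : L.IsNormal 2) (hz : L.IsTriangle x y z)
    (hw : L.IsTriangle x y w) (hzw : z ≠ w) (hu : L.IsTriangle x y u) : u = z ∨ u = w := by
  have hsub : {z, w} ⊆ L.linkVertices {x, y} := by
    simp [Finset.insert_subset_iff, mem_linkVertices, linkVertex_pair hz.1, hz, hw]
  have heq := Finset.eq_of_subset_of_card_le hsub
    (by rw [hL.card_linkVertices _ hz.edge (Finset.card_pair hz.1), Finset.card_pair hzw])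
  have := heq ▸ mem_linkVertices.2 ((linkVertex_pair hz.1).2 hu)
  simpa using this

theorem forall_linkVertex (hL : L.IsNormal 2) {C : ℕ → Prop} (hy : L.LinkVertex {a} y) (hCy : C y)
    (hC : ∀ y z, L.IsTriangle a y z → C y → C z) : ∀ z, L.LinkVertex {a} z → C z := by
  intro z hz
  have ha : {a} ∈ L.faces := mem_of_subset hy.2 (by simp) (by simp)
  induction hL.linkConnected {a} (.inr ha) (by simp) y z hy hz with
  | refl => exact hCy
  | @tail x z _ hadj ih =>
    by_cases hxz : x = z
    · exact hxz ▸ ih hadj.left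
    · exact hC x z (isTriangle_of_linkAdj hadj hxz) (ih hadj.left)

theorem forall_vertex (hL : L.IsNormal 2) {C : ℕ → Prop} (hy : {y} ∈ L.faces) (hCy : C y)
    (hC : ∀ y z, y ≠ z → {y, z} ∈ L.faces → C y → C z) : ∀ z, {z} ∈ L.faces → C z := by
  intro z hz
  have hpath := hL.linkConnected ∅ (.inl rfl) (by simp) y z (by simpa [LinkVertex])
    (by simpa [LinkVertex])
  induction hpath with
  | refl => exact hCy
  | @tail x z _ hadj ih =>
    have hx : C x := ih (by simpa using hadj.left.2)
    by_cases hxz : x = z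
    · exact hxz ▸ hx
    · exact hC x z hxz (by simpa using hadj.2.2) hx

end IsNormal

/-- The vertices `c i`, in cyclic order, form a cycle in the link of the vertex `a`. -/
structure IsLinkCycle (L : SComplex) (a : ℕ) (c : ZMod n → ℕ) : Prop where
  three_le : 3 ≤ n
  injective : Function.Injective c
  isTriangle : ∀ i, L.IsTriangle a (c i) (c (i + 1))

namespace IsLinkCycle

variable {c : ZMod n → ℕ} (h : L.IsLinkCycle a c) (hL : L.IsNormal 2)
include h

theorem isTriangle_sub_one (i : ZMod n) : L.IsTriangle a (c i) (c (i - 1)) := by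
  simpa using (h.isTriangle (i - 1)).swap_right

theorem sub_one_ne_add_one (i : ZMod n) : c (i - 1) ≠ c (i + 1) := by
  refine h.injective.ne fun heq => ?_
  have htwo : ((2 : ℕ) : ZMod n) = 0 := by push_cast; linear_combination -heq
  have := Nat.le_of_dvd two_pos ((ZMod.natCast_eq_zero_iff 2 n).1 htwo)
  have := h.three_le
  omega

include hL

theorem eq_or_eq_of_isTriangle {i : ZMod n} (hz : L.IsTriangle a (c i) z) :
    z = c (i - 1) ∨ z = c (i + 1) :=
  hL.eq_or_eq_of_isTriangle (h.isTriangle_sub_one i) (h.isTriangle i) (h.sub_one_ne_add_one i) hz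

theorem exists_eq (hy : L.LinkVertex {a} y) : ∃ i, c i = y := by
  refine hL.forall_linkVertex (C := fun y => ∃ i, c i = y) (h.isTriangle 0).linkVertex ⟨0, rfl⟩ ?_
    y hy
  rintro _ z hz ⟨i, rfl⟩
  rcases h.eq_or_eq_of_isTriangle hL hz with rfl | rfl
  · exact ⟨i - 1, rfl⟩
  · exact ⟨i + 1, rfl⟩

theorem exists_pair_eq (hyz : L.IsTriangle a y z) :
    ∃ i, ({y, z} : Finset ℕ) = {c i, c (i + 1)} := by
  obtain ⟨i, rfl⟩ := h.exists_eq hL hyz.linkVertex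
  rcases h.eq_or_eq_of_isTriangle hL hyz with rfl | rfl
  · exact ⟨i - 1, by rw [sub_add_cancel, Finset.pair_comm]⟩
  · exact ⟨i, rfl⟩

theorem deg_eq : L.deg {a} = n := by
  have : NeZero n := ⟨by have := h.three_le; omega⟩
  have himage : L.linkVertices {a} = Finset.univ.image c := by
    ext y
    rw [mem_linkVertices, Finset.mem_image]
    refine ⟨fun hy => (h.exists_eq hL hy).imp fun i hi => ⟨Finset.mem_univ i, hi⟩, ?_⟩
    rintro ⟨i, -, rfl⟩
    exact (h.isTriangle i).linkVertex
  rw [deg_eq_card_linkVertices, himage, Finset.card_image_of_injective _ h.injective,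
    Finset.card_univ, ZMod.card]

end IsLinkCycle

namespace IsNormal

theorem deg_eq_three (hL : L.IsNormal 2) (hxy : L.IsTriangle a x y) (hyz : L.IsTriangle a y z)
    (hzx : L.IsTriangle a z x) : L.deg {a} = 3 := by
  refine IsLinkCycle.deg_eq (n := 3) (c := ![x, y, z]) ⟨le_rfl, ?_, ?_⟩ hL
  · have := hxy.2.1
    have := hyz.2.1
    have := hzx.2.1
    intro i j hij
    fin_cases i <;> fin_cases j <;> first | rfl | simp_all
  · intro i
    fin_cases i
    exacts [hxy, hyz, hzx]

theorem exists_isLinkCycle (hL : L.IsNormal 2) (ha : {a} ∈ L.faces) (hn : L.deg {a} = n) :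
    ∃ c : ZMod n → ℕ, L.IsLinkCycle a c := by
  classical
  let G := L.linkGraphAvoiding {a} a
  have degree_eq (v) : G.degree v = 2 := by
    obtain ⟨hva, hv⟩ := mem_linkVertices.1 v.2
    rw [Finset.mem_singleton] at hva
    rw [degree_linkGraphAvoiding v hva, Finset.erase_eq_of_notMem, hL.card_linkVertices _ hv]
    · exact Finset.card_pair hva
    · exact fun h => (mem_linkVertices.1 h).1 (by simp)
  have isCycles : G.IsCycles := fun v _ => by
    rw [← degree_eq v, ← SimpleGraph.card_neighborSet_eq_degree, Set.ncard_eq_toFinset_card',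
      Set.toFinset_card]
  obtain ⟨y, hy⟩ := hL.exists_linkVertex ha (by simp)
  obtain ⟨p, hp, -⟩ := isCycles.exists_cycle_toSubgraph_verts_eq_connectedComponentSupp
    (c := G.connectedComponentMk ⟨y, mem_linkVertices.2 hy⟩) rfl (by
      obtain ⟨z, hz⟩ := (G.degree_pos_iff_exists_adj ⟨y, mem_linkVertices.2 hy⟩).1
        (by rw [degree_eq]; norm_num)
      exact ⟨z, hz⟩)
  have hlen := hp.three_le_length
  suffices h : L.IsLinkCycle a fun i : ZMod p.length => (p.getVert i.val).1 by
    rw [← hn, h.deg_eq hL]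
    exact ⟨_, h⟩
  have : NeZero p.length := ⟨by omega⟩
  refine ⟨hlen, fun i j hij => ?_, fun i => ?_⟩
  · refine ZMod.val_injective _ (hp.getVert_injOn' ?_ ?_ (Subtype.ext hij))
    · exact Nat.le_sub_one_of_lt i.val_lt
    · exact Nat.le_sub_one_of_lt j.val_lt
  · have getVert_add_one : p.getVert (i + 1).val = p.getVert (i.val + 1) := by
      rw [ZMod.val_add, ZMod.val_one'' (by omega)]
      rcases (by have := i.val_lt; omega : i.val + 1 < p.length ∨ i.val + 1 = p.length) with hi | hi
      · rw [Nat.mod_eq_of_lt hi]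
      · rw [hi, Nat.mod_self, p.getVert_zero, p.getVert_length]
    have hadj := p.adj_getVert_succ i.val_lt
    rw [← getVert_add_one] at hadj
    exact isTriangle_of_linkAdj hadj.2.1 fun h => hadj.1 (Subtype.ext h)

end IsNormal

theorem forall_of_add_two {P : ZMod 5 → Prop} (step : ∀ j, P j → P (j + 2)) {j : ZMod 5}
    (hj : P j) (k : ZMod 5) : P k := by
  have hk : ∀ j k : ZMod 5, k = j ∨ k = j + 2 ∨ k = j + 2 + 2 ∨ k = j + 2 + 2 + 2 ∨
    k = j + 2 + 2 + 2 + 2 := by decide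
  have step₂ := step _ (step _ hj)
  rcases hk j k with rfl | rfl | rfl | rfl | rfl
  exacts [hj, step _ hj, step₂, step _ step₂, step _ (step _ step₂)]

theorem natCast_pred_add_one [NeZero n] : ((n - 1 : ℕ) : ZMod n) + 1 = 0 := by
  rw [← Nat.cast_succ, Nat.succ_eq_add_one, Nat.sub_add_cancel NeZero.one_le, ZMod.natCast_self]

namespace IsLinkCycle

variable {c : ZMod n → ℕ}

theorem isLinkCycle_four (hp : L.IsLinkCycle p c) (hq : L.IsLinkCycle q c) (hpq : p ≠ q)
    (i : ZMod n) : L.IsLinkCycle (n := 4) (c i) ![p, c (i + 1), q, c (i - 1)] := by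
  have hp₁ := hp.isTriangle i
  have hp₂ := hp.isTriangle_sub_one i
  have hq₁ := hq.isTriangle i
  have hq₂ := hq.isTriangle_sub_one i
  refine ⟨by norm_num, ?_, fun j => ?_⟩
  · have := hp.sub_one_ne_add_one i
    have := hp₁.2.2.1
    have := hp₂.2.2.1
    have := hq₁.2.2.1
    have := hq₂.2.2.1
    intro j k hjk
    fin_cases j <;> fin_cases k <;> first | rfl | simp_all
  · fin_cases j
    exacts [hp₁.swap_left, hq₁.rotate, hq₂.swap_left, hp₂.rotate]

theorem left_mem_or_right_mem (hL : L.IsNormal 2) (hp : L.IsLinkCycle p c)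
    (hq : L.IsLinkCycle q c) (hpq : p ≠ q) (h : L.IsTriangle x y z) :
    p ∈ ({x, y, z} : Finset ℕ) ∨ q ∈ ({x, y, z} : Finset ℕ) := by
  have mem_of_link {i y z} (h : L.IsTriangle (c i) y z) :
      p ∈ ({y, z} : Finset ℕ) ∨ q ∈ ({y, z} : Finset ℕ) := by
    obtain ⟨j, hj⟩ := (hp.isLinkCycle_four hq hpq i).exists_pair_eq hL h
    rw [hj]
    have left_mem {x y : ℕ} := Finset.mem_insert_self x {y}
    have right_mem {x y : ℕ} := Finset.mem_insert_of_mem (b := x) (Finset.mem_singleton_self y)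
    fin_cases j
    exacts [.inl left_mem, .inr right_mem, .inr left_mem, .inl right_mem]
  have vertex_eq : ∀ x, {x} ∈ L.faces → x = p ∨ x = q ∨ ∃ i, c i = x := by
    refine hL.forall_vertex (y := p) ?_ (.inl rfl) fun y z hyz hmem hy => ?_
    · exact (hp.isTriangle 0).left_mem
    · have hz := linkVertex_singleton.2 ⟨hyz, hmem⟩
      rcases hy with rfl | rfl | ⟨i, rfl⟩
      · exact .inr (.inr (hp.exists_eq hL hz))
      · exact .inr (.inr (hq.exists_eq hL hz))
      · obtain ⟨j, rfl⟩ := (hp.isLinkCycle_four hq hpq i).exists_eq hL hz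
        fin_cases j <;> simp
  rcases vertex_eq x h.left_mem with rfl | rfl | ⟨i, rfl⟩
  · simp
  · simp
  · exact (mem_of_link h).imp (Finset.mem_insert_of_mem ·) (Finset.mem_insert_of_mem ·)

theorem mem_bipyramid (hp : L.IsLinkCycle p c) (hx : x = p ∨ x = q) (i : ZMod n) :
    {x, c i, c (i + 1)} ∈ bipyramid p q (fun j => c j) (n - 1) := by
  have hn := hp.three_le
  have : NeZero n := ⟨by omega⟩
  refine ⟨x, hx, ?_⟩
  rcases (by have := i.val_lt; omega : i.val < n - 1 ∨ i.val = n - 1) with hi | hi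
  · exact .inl ⟨i.val, hi, by simp⟩
  · rw [← ZMod.natCast_rightInverse i, hi]
    exact .inr (by simp [natCast_pred_add_one (n := n)])

theorem realSpace_eq_realization_bipyramid (hL : L.IsNormal 2) (hp : L.IsLinkCycle p c)
    (hq : L.IsLinkCycle q c) (hpq : p ≠ q) :
    L.realSpace = realization (bipyramid p q (fun j => c j) (n - 1)) := by
  refine (realization_mono fun s hs => ?_).antisymm (realization_mono ?_)
  · obtain ⟨F, hF, hsF, hcard⟩ := hL.exists_superset s hs
    obtain ⟨x, y, z, hxy, hxz, hyz, rfl⟩ := Finset.card_eq_three.1 hcard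
    have hF : L.IsTriangle x y z := ⟨hxy, hyz, hxz, hF⟩
    rcases hp.left_mem_or_right_mem hL hq hpq hF with hmem | hmem
    · obtain ⟨y', z', h, heq⟩ := hF.exists_eq_of_mem hmem
      obtain ⟨i, hi⟩ := hp.exists_pair_eq hL h
      exact ⟨_, hp.mem_bipyramid (.inl rfl) i, by rwa [← hi, ← heq]⟩
    · obtain ⟨y', z', h, heq⟩ := hF.exists_eq_of_mem hmem
      obtain ⟨i, hi⟩ := hq.exists_pair_eq hL h
      exact ⟨_, hp.mem_bipyramid (.inr rfl) i, by rwa [← hi, ← heq]⟩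
  · have isTriangle {x} (hx : x = p ∨ x = q) (i) : L.IsTriangle x (c i) (c (i + 1)) := by
      rcases hx with rfl | rfl
      exacts [hp.isTriangle i, hq.isTriangle i]
    have : NeZero n := ⟨by have := hp.three_le; omega⟩
    rintro _ ⟨x, hx, ⟨i, -, rfl⟩ | rfl⟩
    · exact ⟨_, (isTriangle hx i).2.2.2, by simp⟩
    · exact ⟨_, (isTriangle hx (n - 1 : ℕ)).2.2.2, by simp [natCast_pred_add_one (n := n)]⟩

theorem nonempty_homeomorph_sphere (hL : L.IsNormal 2) (hp : L.IsLinkCycle p c)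
    (hq : L.IsLinkCycle q c) (hpq : p ≠ q) :
    Nonempty (L.realSpace ≃ₜ Metric.sphere (0 : EuclideanSpace ℝ (Fin 3)) 1) := by
  have hn := hp.three_le
  rw [realSpace_eq_realization_bipyramid hL hp hq hpq]
  refine nonempty_homeomorph_sphere_bipyramid (by omega) hpq ?_ ?_ ?_
  · intro i hi j hj hij
    rw [Set.mem_Iic] at hi hj
    have := congrArg ZMod.val (hp.injective hij)
    rwa [ZMod.val_natCast_of_lt (by omega), ZMod.val_natCast_of_lt (by omega)] at this
  · exact fun i _ => (hp.isTriangle i).1.symm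
  · exact fun i _ => (hq.isTriangle i).1.symm

end IsLinkCycle

section NonAdjacent

variable (hp : {p} ∈ L.faces) (hq : {q} ∈ L.faces) (hpq : p ≠ q) (hpq' : {p, q} ∉ L.faces)
include hp hq hpq hpq'

theorem insert_insert_linkVertices :
    insert p (insert q (L.linkVertices {p})) ⊆ L.linkVertices ∅ ∧
      (insert p (insert q (L.linkVertices {p}))).card = L.deg {p} + 2 := by
  refine ⟨fun x hx => mem_linkVertices.2 ⟨by simp, ?_⟩, ?_⟩
  · simp only [Finset.mem_insert, mem_linkVertices] at hx
    rcases hx with rfl | rfl | hx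
    exacts [hp, hq, mem_of_subset hx.2 (by simp) (by simp)]
  · have hp' : p ∉ insert q (L.linkVertices {p}) := by
      simp [hpq, mem_linkVertices, linkVertex_singleton]
    have hq' : q ∉ L.linkVertices {p} := by
      simp [hpq', mem_linkVertices, linkVertex_singleton]
    rw [Finset.card_insert_of_notMem hp', Finset.card_insert_of_notMem hq',
      deg_eq_card_linkVertices]

theorem deg_add_two_le_fnum_zero : L.deg {p} + 2 ≤ L.fnum 0 := by
  obtain ⟨hsub, hcard⟩ := insert_insert_linkVertices hp hq hpq hpq'
  rw [fnum_zero, ← hcard]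
  exact Finset.card_le_card hsub

theorem eq_or_eq_or_linkVertex (hf : L.fnum 0 ≤ L.deg {p} + 2) (hx : {x} ∈ L.faces) :
    x = p ∨ x = q ∨ L.LinkVertex {p} x := by
  obtain ⟨hsub, hcard⟩ := insert_insert_linkVertices hp hq hpq hpq'
  have heq := Finset.eq_of_subset_of_card_le hsub (by rwa [← fnum_zero, hcard])
  have hx' : x ∈ L.linkVertices ∅ := mem_linkVertices.2 ⟨by simp, hx⟩
  simpa [← heq, mem_linkVertices] using hx'

end NonAdjacent

namespace IsLinkCycle

section Apex

variable {c : ZMod n → ℕ} (h : L.IsLinkCycle p c) (hL : L.IsNormal 2)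
  (hdeg : ∀ a, {a} ∈ L.faces → 4 ≤ L.deg {a})
include h hL hdeg

/-- If the apex of the second triangle on an edge of the cycle were a neighbour, in the cycle, of
that edge, then the vertex between them would have degree three. -/
theorem exists_apex (i : ZMod n) :
    ∃ w, L.IsTriangle (c i) (c (i + 1)) w ∧ w ≠ p ∧ w ≠ c (i - 1) ∧ w ≠ c (i + 2) := by
  have hi := h.isTriangle i
  obtain ⟨w, hw, hwp⟩ := hL.exists_isTriangle_ne hi.rotate
  have not_deg_three {a x y z} (hxy : L.IsTriangle a x y) (hyz : L.IsTriangle a y z)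
      (hzx : L.IsTriangle a z x) : False := by
    have := hdeg a hxy.left_mem
    have := hL.deg_eq_three hxy hyz hzx
    omega
  refine ⟨w, hw, hwp, ?_, ?_⟩
  · rintro rfl
    exact not_deg_three hi.swap_left hw (h.isTriangle_sub_one i).rotate
  · rintro rfl
    have hi' := h.isTriangle (i + 1)
    rw [add_assoc, one_add_one_eq_two] at hi'
    exact not_deg_three hi.rotate.swap_left.swap_right hw.swap_left hi'.rotate

end Apex

theorem exists_isLinkCycle_of_deg_eq_four {c : ZMod 4 → ℕ} (h : L.IsLinkCycle p c)
    (hL : L.IsNormal 2) (hdeg : ∀ a, {a} ∈ L.faces → L.deg {a} = 4) :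
    ∃ q, p ≠ q ∧ L.IsLinkCycle q c := by
  choose w hw hwp hw₁ hw₂ using h.exists_apex hL fun a ha => (hdeg a ha).ge
  have ne_c (i j) : w i ≠ c j := by
    have hj : ∀ i j : ZMod 4, j = i ∨ j = i + 1 ∨ j = i - 1 ∨ j = i + 2 := by decide
    rcases hj i j with rfl | rfl | rfl | rfl
    exacts [(hw _).2.2.1.symm, (hw i).2.1.symm, hw₁ i, hw₂ i]
  have hconst (i) : w (i - 1) = w i := by
    by_contra hne
    have hw' := hw (i - 1)
    rw [sub_add_cancel] at hw'
    have hsub : {p, c (i - 1), c (i + 1), w (i - 1), w i} ⊆ L.linkVertices {c i} := by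
      simp only [Finset.insert_subset_iff, Finset.singleton_subset_iff, mem_linkVertices]
      exact ⟨(h.isTriangle i).swap_left.linkVertex, hw'.swap_left.linkVertex, (hw i).linkVertex,
        hw'.rotate.linkVertex, (hw i).swap_right.linkVertex⟩
    have hcard : ({p, c (i - 1), c (i + 1), w (i - 1), w i} : Finset ℕ).card = 5 := by
      simp [(h.isTriangle i).2.2.1, (h.isTriangle_sub_one i).2.2.1, h.sub_one_ne_add_one i, hne,
        fun i => (hwp i).symm, fun i j => (ne_c i j).symm]
    have := Finset.card_le_card hsub
    rw [hcard, ← deg_eq_card_linkVertices, hdeg _ (hw i).left_mem] at this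
    omega
  have hw0 (i) : w i = w 0 := by
    have h₁ : w 1 = w 0 := (hconst 1).symm
    have h₂ : w 2 = w 1 := (hconst 2).symm
    have h₃ : w 3 = w 2 := (hconst 3).symm
    fin_cases i
    exacts [rfl, h₁, h₂.trans h₁, h₃.trans (h₂.trans h₁)]
  exact ⟨w 0, (hwp 0).symm, h.three_le, h.injective, fun i => hw0 i ▸ (hw i).rotate.rotate⟩

/-- The chord joins `c (i + 3)` to `c i` and `c (i + 1)`, so it has no other non-neighbour than
`q`. -/
theorem notMem_of_chord {c : ZMod 5 → ℕ} (h : L.IsLinkCycle p c)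
    (hvert : ∀ x, {x} ∈ L.faces → x = p ∨ x = q ∨ ∃ i, c i = x)
    (hfull : ∀ a, {a} ∈ L.faces → ∃ b, {b} ∈ L.faces ∧ a ≠ b ∧ {a, b} ∉ L.faces) {i : ZMod 5}
    (hi : L.IsTriangle (c i) (c (i + 1)) (c (i + 3))) : {c (i + 3), q} ∉ L.faces := by
  intro hiq
  obtain ⟨b, hb, hne, hnot⟩ := hfull _ hi.rotate.rotate.left_mem
  rcases hvert b hb with rfl | rfl | ⟨j, rfl⟩
  · exact hnot (h.isTriangle (i + 3)).swap_left.edge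
  · exact hnot hiq
  · have hj : ∀ i j : ZMod 5,
      j = i ∨ j = i + 1 ∨ j = i + 3 - 1 ∨ j = i + 3 ∨ j = i + 3 + 1 := by decide
    rcases hj i j with rfl | rfl | rfl | rfl | rfl
    exacts [hnot hi.rotate.rotate.edge, hnot hi.rotate.rotate.swap_right.edge,
      hnot (h.isTriangle_sub_one _).rotate.edge, hne rfl, hnot (h.isTriangle _).rotate.edge]

/-- The second triangle on the edge `c i, c (i + 1)` has apex `q` or the opposite vertex
`c (i + 3)`. In the latter case `c (i + 3)` is not adjacent to `q`; this forces the opposite apex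
two steps further, hence everywhere, and leaves `q` without neighbours. -/
theorem exists_isLinkCycle_of_deg_eq_five {c : ZMod 5 → ℕ} (h : L.IsLinkCycle p c)
    (hL : L.IsNormal 2) (hdeg : ∀ a, {a} ∈ L.faces → 4 ≤ L.deg {a})
    (hfull : ∀ a, {a} ∈ L.faces → ∃ b, {b} ∈ L.faces ∧ a ≠ b ∧ {a, b} ∉ L.faces)
    (hf : L.fnum 0 ≤ 7) : ∃ q, p ≠ q ∧ L.IsLinkCycle q c := by
  have hp : {p} ∈ L.faces := (h.isTriangle 0).left_mem
  obtain ⟨q, hq, hpq, hpq'⟩ := hfull p hp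
  have eq_or_eq {x} (hx : {x} ∈ L.faces) : x = p ∨ x = q ∨ ∃ i, c i = x :=
    (eq_or_eq_or_linkVertex hp hq hpq hpq' (by rwa [h.deg_eq hL]) hx).imp_right
      (Or.imp_right (h.exists_eq hL))
  have index_cases : ∀ i j : ZMod 5,
    j = i ∨ j = i + 1 ∨ j = i - 1 ∨ j = i + 2 ∨ j = i + 3 := by decide
  have apex (i) :
      L.IsTriangle (c i) (c (i + 1)) q ∨ L.IsTriangle (c i) (c (i + 1)) (c (i + 3)) := by
    obtain ⟨w, hw, hwp, hw₁, hw₂⟩ := h.exists_apex hL hdeg i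
    rcases eq_or_eq hw.rotate.rotate.left_mem with rfl | rfl | ⟨j, rfl⟩
    · exact absurd rfl hwp
    · exact .inl hw
    · rcases index_cases i j with rfl | rfl | rfl | rfl | rfl
      exacts [absurd rfl hw.2.2.1, absurd rfl hw.2.1, absurd rfl hw₁, absurd rfl hw₂, .inr hw]
  have chord {i} := h.notMem_of_chord (i := i) (fun x => eq_or_eq) hfull
  have step {j} (hj : {c j, q} ∉ L.faces) : {c (j + 2), q} ∉ L.faces := by
    have hj' := apex (j - 1)
    rw [sub_add_cancel] at hj'
    rcases hj' with hj' | hj'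
    · exact absurd hj'.rotate.edge hj
    · have := chord (i := j - 1) (by rwa [sub_add_cancel])
      rwa [show j - 1 + 3 = j + 2 by ring] at this
  have edge (j) : {c j, q} ∈ L.faces := by
    by_contra hj
    obtain ⟨y, hyq, hy⟩ := hL.exists_linkVertex hq (by simp)
    rcases eq_or_eq (x := y) (mem_of_subset hy (by simp) (by simp)) with rfl | rfl | ⟨k, rfl⟩
    · exact hpq' hy
    · exact hyq (by simp)
    · exact forall_of_add_two (P := fun i => {c i, q} ∉ L.faces) (fun _ => step) hj k hy
  refine ⟨q, hpq, h.three_le, h.injective, fun i => ?_⟩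
  rcases apex i with hi | hi
  · exact hi.rotate.rotate
  · exact absurd (edge _) (chord hi)

end IsLinkCycle

theorem IsNormal.nonempty_homeomorph_sphere_of_fnum_zero_le_seven (hL : L.IsNormal 2)
    (hdeg : ∀ a, {a} ∈ L.faces → 4 ≤ L.deg {a})
    (hfull : ∀ a, {a} ∈ L.faces → ∃ b, {b} ∈ L.faces ∧ a ≠ b ∧ {a, b} ∉ L.faces)
    (hf : L.fnum 0 ≤ 7) :
    Nonempty (L.realSpace ≃ₜ Metric.sphere (0 : EuclideanSpace ℝ (Fin 3)) 1) := by
  have deg_le (a) (ha : {a} ∈ L.faces) : L.deg {a} ≤ 5 := by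
    obtain ⟨b, hb, hab, hab'⟩ := hfull a ha
    have := deg_add_two_le_fnum_zero ha hb hab hab'
    omega
  by_cases hfive : ∃ a, {a} ∈ L.faces ∧ L.deg {a} = 5
  · obtain ⟨a, ha, ha5⟩ := hfive
    obtain ⟨c, hc⟩ := hL.exists_isLinkCycle ha ha5
    obtain ⟨q, hq, hqc⟩ := hc.exists_isLinkCycle_of_deg_eq_five hL hdeg hfull hf
    exact hc.nonempty_homeomorph_sphere hL hqc hq
  · have deg_eq (a) (ha : {a} ∈ L.faces) : L.deg {a} = 4 := by
      have := hdeg a ha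
      have := deg_le a ha
      have : L.deg {a} ≠ 5 := fun h => hfive ⟨a, ha, h⟩
      omega
    obtain ⟨s, hs⟩ := hL.nonempty
    obtain ⟨a, has⟩ := nonempty_of_mem hs
    have ha : {a} ∈ L.faces := mem_of_subset hs (by simpa) (by simp)
    obtain ⟨c, hc⟩ := hL.exists_isLinkCycle ha (deg_eq a ha)
    obtain ⟨q, hq, hqc⟩ := hc.exists_isLinkCycle_of_deg_eq_four hL deg_eq
    exact hc.nonempty_homeomorph_sphere hL hqc hq

end Surface

section SimplexBoundary

variable {K : SComplex} {r s τ : Finset ℕ} {d e u v y z : ℕ}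

theorem linkVertex_lk (hrs : Disjoint r s) :
    (K.lk s).LinkVertex r y ↔ K.LinkVertex (r ∪ s) y := by
  simp only [LinkVertex, mem_lk, Finset.insert_nonempty, Finset.disjoint_insert_left, hrs,
    Finset.insert_union, Finset.mem_union]
  tauto

theorem linkAdj_lk (hrs : Disjoint r s) : (K.lk s).LinkAdj r y z ↔ K.LinkAdj (r ∪ s) y z := by
  simp only [LinkAdj, mem_lk, Finset.insert_nonempty, Finset.disjoint_insert_left, hrs,
    Finset.insert_union, Finset.mem_union]
  tauto

theorem linkVertices_lk (hrs : Disjoint r s) :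
    (K.lk s).linkVertices r = K.linkVertices (r ∪ s) := by
  ext y
  rw [mem_linkVertices, mem_linkVertices, linkVertex_lk hrs]

theorem deg_lk (hrs : Disjoint r s) : (K.lk s).deg r = K.deg (r ∪ s) := by
  rw [deg_eq_card_linkVertices, deg_eq_card_linkVertices, linkVertices_lk hrs]

theorem IsNormal.lk (hK : K.IsNormal d) (hs : s ∈ K.faces) (hsd : s.card + e = d) :
    (K.lk s).IsNormal e where
  nonempty := by
    obtain ⟨y, hy⟩ := hK.exists_linkVertex hs (by omega)
    exact ⟨{y}, singleton_mem_lk.2 hy⟩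
  card_le r hr := by
    obtain ⟨-, hrs, hmem⟩ := mem_lk.1 hr
    have := hK.card_le _ hmem
    rw [Finset.card_union_of_disjoint hrs] at this
    omega
  exists_superset r hr := by
    obtain ⟨hne, hrs, hmem⟩ := mem_lk.1 hr
    obtain ⟨F, hF, hsub, hcard⟩ := hK.exists_superset _ hmem
    obtain ⟨hrF, hsF⟩ := Finset.union_subset_iff.1 hsub
    have hrF' : r ⊆ F \ s := Finset.subset_sdiff.2 ⟨hrF, hrs⟩
    refine ⟨F \ s, mem_lk.2 ⟨hne.mono hrF', Finset.sdiff_disjoint, ?_⟩, hrF', ?_⟩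
    · rwa [Finset.sdiff_union_of_subset hsF]
    · rw [Finset.card_sdiff_of_subset hsF]
      omega
  card_linkVertices r hr hre := by
    obtain ⟨-, hrs, hmem⟩ := mem_lk.1 hr
    rw [linkVertices_lk hrs, hK.card_linkVertices _ hmem]
    rw [Finset.card_union_of_disjoint hrs]
    omega
  linkConnected r hr hre := by
    have hrs : Disjoint r s ∧ r ∪ s ∈ K.faces := by
      rcases hr with rfl | hr
      · simpa
      · exact (mem_lk.1 hr).2
    intro y z hy hz
    have hadj : (K.lk s).LinkAdj r = K.LinkAdj (r ∪ s) := by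
      ext a b
      exact linkAdj_lk hrs.1
    rw [linkVertex_lk hrs.1] at hy hz
    rw [hadj]
    refine hK.linkConnected _ (.inr hrs.2) ?_ y z hy hz
    rw [Finset.card_union_of_disjoint hrs.1]
    omega

theorem properFaces_subset (h : ∀ x ∈ s, s.erase x ∈ K.faces) : properFaces s ⊆ K.faces := by
  intro r hr
  obtain ⟨hne, hrs⟩ := mem_properFaces.1 hr
  obtain ⟨x, hxs, hxr⟩ := Finset.exists_of_ssubset hrs
  exact mem_of_subset (h x hxs) (Finset.subset_erase.2 ⟨hrs.1, hxr⟩) hne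

namespace IsNormal

theorem subset_of_facetAdj (hK : K.IsNormal d) (hd : 0 < d) (hs : s.card = d + 2)
    (h : ∀ x ∈ s, s.erase x ∈ K.faces) {F G : Finset ℕ} (hFG : K.FacetAdj F G) (hF : F ⊆ s) :
    G ⊆ s := by
  obtain ⟨hF', hG', hcard⟩ := hFG
  have hFcard := hK.card_of_isFacet hF'
  have hGcard := hK.card_of_isFacet hG'
  have hrs : F ∩ G ⊆ s := Finset.inter_subset_left.trans hF
  have hr : F ∩ G ∈ K.faces :=
    mem_of_subset hF'.1 Finset.inter_subset_left (Finset.card_pos.1 (by omega))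
  have linkVertices_eq : s \ (F ∩ G) = K.linkVertices (F ∩ G) := by
    refine Finset.eq_of_subset_of_card_le (fun x hx => ?_) ?_
    · rw [Finset.mem_sdiff] at hx
      refine mem_linkVertices.2 ⟨hx.2, properFaces_subset h (mem_properFaces.2
        ⟨Finset.insert_nonempty _ _, (Finset.insert_subset hx.1 hrs).ssubset_of_ne ?_⟩)⟩
      rintro rfl
      rw [Finset.card_insert_of_notMem hx.2] at hs
      omega
    · rw [hK.card_linkVertices _ hr (by omega), Finset.card_sdiff_of_subset hrs]
      omega
  intro x hx
  by_cases hxF : x ∈ F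
  · exact hF hxF
  have hx' : x ∈ K.linkVertices (F ∩ G) := mem_linkVertices.2
    ⟨fun h => hxF (Finset.mem_inter.1 h).1, mem_of_subset hG'.1
      (Finset.insert_subset hx Finset.inter_subset_right) (Finset.insert_nonempty _ _)⟩
  exact Finset.sdiff_subset (linkVertices_eq ▸ hx')

theorem faces_eq_properFaces (hK : K.IsNormal d) (hd : 0 < d) (hs : s.card = d + 2)
    (h : ∀ x ∈ s, s.erase x ∈ K.faces) : K.faces = properFaces s := by
  refine (properFaces_subset h).antisymm' fun r hr => ?_
  have hr' : r ⊆ s := by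
    obtain ⟨x, hx⟩ := Finset.card_pos.1 (by omega : 0 < s.card)
    have hF : K.IsFacet (s.erase x) := ⟨h x hx, fun t ht hst => Finset.eq_of_subset_of_card_le hst
      (by rw [Finset.card_erase_of_mem hx, hs]; exact hK.card_le t ht)⟩
    obtain ⟨G, hG, hrG⟩ := exists_isFacet_superset hr
    refine hrG.trans ?_
    have hchain := hK.isNormalPseudomanifold.2.1 _ G hF hG
    clear hG hrG
    induction hchain with
    | refl => exact Finset.erase_subset x s
    | tail _ hadj ih => exact hK.subset_of_facetAdj hd hs h hadj ih
  refine mem_properFaces.2 ⟨nonempty_of_mem hr, hr'.ssubset_of_ne ?_⟩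
  rintro rfl
  have := hK.card_le r hr
  omega

theorem erase_linkVertices_mem (hK : K.IsNormal d) (hd : 0 < d) (hf : K.fnum 0 = d + 2) {x : ℕ}
    (hx : x ∈ K.linkVertices ∅) : (K.linkVertices ∅).erase x ∈ K.faces := by
  set V := K.linkVertices ∅
  have subset_V {r} (hr : r ∈ K.faces) : r ⊆ V := fun y hy =>
    mem_linkVertices.2 ⟨by simp, mem_of_subset hr (by simpa) (by simp)⟩
  have hV : V.card = d + 2 := fnum_zero.symm.trans hf
  obtain ⟨F, hF, -, hFcard⟩ := hK.exists_superset _ hK.nonempty.choose_spec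
  by_cases hxF : x ∈ F
  · have hrcard : (F.erase x).card = d := by rw [Finset.card_erase_of_mem hxF]; omega
    have hr : F.erase x ∈ K.faces :=
      mem_of_subset hF (F.erase_subset x) (Finset.card_pos.1 (by omega))
    obtain ⟨y, hy, hyx⟩ :=
      Finset.exists_mem_ne (hK.card_linkVertices _ hr hrcard ▸ one_lt_two) x
    obtain ⟨hyr, hy⟩ := mem_linkVertices.1 hy
    convert hy
    refine (Finset.eq_of_subset_of_card_le (fun z hz => ?_) ?_).symm
    · exact Finset.mem_erase.2 ⟨by grind, subset_V hy hz⟩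
    · rw [Finset.card_insert_of_notMem hyr, Finset.card_erase_of_mem hx]
      omega
  · rwa [← Finset.eq_of_subset_of_card_le (Finset.subset_erase.2 ⟨subset_V hF, hxF⟩)]
    rw [Finset.card_erase_of_mem hx]
    omega

theorem exists_faces_eq_properFaces (hK : K.IsNormal d) (hd : 0 < d) (hf : K.fnum 0 = d + 2) :
    ∃ s, s.card = d + 2 ∧ K.faces = properFaces s :=
  have hs : (K.linkVertices ∅).card = d + 2 := fnum_zero.symm.trans hf
  ⟨_, hs, hK.faces_eq_properFaces hd hs fun _ => hK.erase_linkVertices_mem hd hf⟩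

end IsNormal

theorem insert_insert_mem_iff_mem_lk (hr : r.Nonempty) (hu : u ∉ r) (hv : v ∉ r) :
    insert u (insert v r) ∈ K.faces ↔ r ∈ (K.lk {u, v}).faces := by
  rw [mem_lk, Finset.union_comm, Finset.insert_union, Finset.singleton_union]
  simp [hr, hu, hv]

theorem singleton_mem_properFaces (hs : 1 < s.card) : {y} ∈ properFaces s ↔ y ∈ s := by
  rw [mem_properFaces, and_iff_right (Finset.singleton_nonempty y)]
  refine ⟨fun h => Finset.singleton_subset_iff.1 h.1, fun h => ?_⟩
  refine (Finset.singleton_subset_iff.2 h).ssubset_of_ne ?_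
  rintro rfl
  simp at hs

section LinkOfEdge

variable (hmem : {u, v} ∈ K.faces) (hτ : 1 < τ.card) (hlk : (K.lk {u, v}).faces = properFaces τ)

include hτ hlk in
theorem linkVertex_pair_iff_mem : K.LinkVertex {u, v} y ↔ y ∈ τ := by
  rw [← singleton_mem_lk, hlk, singleton_mem_properFaces hτ]

include hτ hlk in
theorem disjoint_pair_of_lk_eq : u ∉ τ ∧ v ∉ τ := by
  refine ⟨fun h => ?_, fun h => ?_⟩
  all_goals exact ((linkVertex_pair_iff_mem hτ hlk).2 h).1 (by simp)

include hmem hτ hlk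

theorem insert_insert_mem_iff_ssubset (hu : u ∉ r) (hv : v ∉ r) :
    insert u (insert v r) ∈ K.faces ↔ r ⊂ τ := by
  rcases r.eq_empty_or_nonempty with rfl | hr
  · exact iff_of_true hmem (Finset.empty_ssubset.2 (Finset.card_pos.1 (by omega)))
  · rw [insert_insert_mem_iff_mem_lk hr hu hv, hlk, mem_properFaces, and_iff_right hr]

theorem isFlippable_of_lk_eq (huv : u ≠ v) (hτK : τ ∉ K.faces) : K.IsFlippable u v τ :=
  have ⟨hu, hv⟩ := disjoint_pair_of_lk_eq hτ hlk
  ⟨huv, hu, hv, hτK, fun _ => insert_insert_mem_iff_ssubset hmem hτ hlk⟩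

end LinkOfEdge

end SimplexBoundary

section Reduced

variable {K : SComplex} {s τ : Finset ℕ} {a t : ℕ}

/-- A normal 3-pseudomanifold without missing tetrahedra whose `g₂` cannot be lowered by a
bistellar 2-move or an edge contraction. Compared with the class `R`, the number of singular
vertices is arbitrary and the moves preceded by an edge expansion are not considered. -/
structure IsReduced (K : SComplex) : Prop where
  isNormal : K.IsNormal 3
  mem_of_properFaces :
    ∀ s : Finset ℕ, s.card = 4 → (∀ t ∈ properFaces s, t ∈ K.faces) → s ∈ K.faces
  g2_le_of_bistellarTwoMove :
    ∀ K' : SComplex, K'.IsNormalPseudomanifold 3 → BistellarTwoMove K K' → K.g2 ≤ K'.g2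
  g2_le_of_edgeContraction :
    ∀ K' : SComplex, K'.IsNormalPseudomanifold 3 → EdgeContraction K K' → K.g2 ≤ K'.g2

theorem InClassR.isReduced (hK : InClassR K) : K.IsReduced :=
  have ⟨hnormal, _, _, hfill, hmin⟩ := hK
  ⟨hnormal.isNormal, hfill, fun K' hK' h => hmin K' hK' (.inl h),
    fun K' hK' h => hmin K' hK' (.inr (.inl h))⟩

namespace IsReduced

theorem mem_of_erase_mem (hK : K.IsReduced) (hs : s.card = 4) (h : ∀ x ∈ s, s.erase x ∈ K.faces) :
    s ∈ K.faces :=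
  hK.mem_of_properFaces s hs fun _ ht => properFaces_subset h ht

theorem not_isFlippable (hK : K.IsReduced) {u v : ℕ} (hτ : τ.card = 3) :
    ¬ K.IsFlippable u v τ := fun h => by
  have hnormal := h.isNormal_flip (Finset.card_pos.1 (by omega)) (hτ ▸ hK.isNormal)
  rw [hτ] at hnormal
  exact (h.g2_flip_lt (by omega)).not_ge
    (hK.g2_le_of_bistellarTwoMove _ hnormal.isNormalPseudomanifold (h.bistellarTwoMove hτ))

theorem not_isContractible (hK : K.IsReduced) {u v w : ℕ} (huv : 4 ≤ K.deg {u, v}) :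
    ¬ K.IsContractible u v w := fun h =>
  (h.g2_contract_lt huv).not_ge (hK.g2_le_of_edgeContraction _
    (h.isNormal_contract hK.isNormal).isNormalPseudomanifold
    ⟨u, v, h.edgeContractionAt hK.isNormal⟩)

theorem isNormal_lk_pair (hK : K.IsReduced) (hta : t ≠ a) (hmem : {t, a} ∈ K.faces) :
    (K.lk {t, a}).IsNormal 1 :=
  hK.isNormal.lk hmem (by rw [Finset.card_pair hta])

theorem insert_mem_of_lk_eq (hK : K.IsReduced) (hta : t ≠ a) (hmem : {t, a} ∈ K.faces)
    (hτ : τ.card = 3) (hlk : (K.lk {t, a}).faces = properFaces τ) : insert t τ ∈ K.faces := by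
  have hτ' : 1 < τ.card := by omega
  obtain ⟨htτ, haτ⟩ := disjoint_pair_of_lk_eq hτ' hlk
  have hτK : τ ∈ K.faces := by
    by_contra hτK
    exact hK.not_isFlippable hτ (isFlippable_of_lk_eq hmem hτ' hlk hta hτK)
  refine hK.mem_of_erase_mem (by rw [Finset.card_insert_of_notMem htτ, hτ]) fun x hx => ?_
  rcases Finset.mem_insert.1 hx with rfl | hx
  · rwa [Finset.erase_insert htτ]
  · have hxt : t ≠ x := fun h => htτ (h ▸ hx)
    rw [Finset.erase_insert_of_ne hxt]
    refine mem_of_subset ?_ (Finset.insert_subset_insert t (Finset.subset_insert a (τ.erase x)))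
      (Finset.insert_nonempty _ _)
    exact (insert_insert_mem_iff_ssubset hmem hτ' hlk (by simp [htτ]) (by simp [haτ])).2
      (Finset.erase_ssubset hx)

/-- The link of `ta` is the boundary of a triangle `τ`. Then `τ` is a face of `K`, since otherwise
a bistellar move applies; hence so is the tetrahedron `tτ`, and the link of `t` is the boundary of
the tetrahedron `aτ`. -/
theorem hasSphereLink_of_deg_eq_three (hK : K.IsReduced) (hta : t ≠ a) (hmem : {t, a} ∈ K.faces)
    (hdeg : K.deg {t, a} = 3) : K.HasSphereLink 3 t := by
  obtain ⟨τ, hτ, hlk⟩ := (hK.isNormal_lk_pair hta hmem).exists_faces_eq_properFaces one_pos hdeg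
  have hτ' : 1 < τ.card := by omega
  obtain ⟨htτ, haτ⟩ := disjoint_pair_of_lk_eq hτ' hlk
  have hcard : (insert a τ).card = 4 := by rw [Finset.card_insert_of_notMem haτ, hτ]
  have hL : (K.lk {t}).IsNormal 2 :=
    hK.isNormal.lk (mem_of_subset hmem (by simp) (by simp)) (by simp)
  have hlkt : (K.lk {t}).faces = properFaces (insert a τ) := by
    refine hL.faces_eq_properFaces two_pos hcard fun x hx => ?_
    rw [mem_lk, Finset.union_comm, Finset.singleton_union, Finset.disjoint_singleton_right]
    refine ⟨Finset.card_pos.1 (by rw [Finset.card_erase_of_mem hx]; omega), by grind, ?_⟩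
    rcases Finset.mem_insert.1 hx with rfl | hx
    · rw [Finset.erase_insert haτ]
      exact hK.insert_mem_of_lk_eq hta hmem hτ hlk
    · rw [Finset.erase_insert_of_ne fun h : a = _ => haτ (h ▸ hx)]
      exact (insert_insert_mem_iff_ssubset hmem hτ' hlk (by simp [htτ]) (by simp [haτ])).2
        (Finset.erase_ssubset hx)
  rw [HasSphereLink, show (K.lk {t}).realSpace = realization (K.lk {t}).faces from rfl, hlkt]
  exact nonempty_homeomorph_sphere_of_card_eq (by rw [hcard]; simp)

theorem four_le_deg_pair (hK : K.IsReduced) (ht : K.IsSingular t) (hta : t ≠ a)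
    (hmem : {t, a} ∈ K.faces) : 4 ≤ K.deg {t, a} := by
  have three_le : 3 ≤ K.deg {t, a} := by
    have hL : (K.lk {t}).IsNormal 2 := hK.isNormal.lk ht.1 (by simp)
    have ha : {a} ∈ (K.lk {t}).faces := singleton_mem_lk.2 (linkVertex_singleton.2 ⟨hta, hmem⟩)
    obtain ⟨c, hc⟩ := hL.exists_isLinkCycle ha (deg_lk (by simpa using hta.symm))
    rw [Finset.pair_comm]
    exact hc.three_le
  exact three_le.lt_of_ne' fun h => ht.2 (hK.hasSphereLink_of_deg_eq_three hta hmem h)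

theorem insert_insert_mem_of_forall_adj (hK : K.IsReduced) (hta : t ≠ a)
    (hmem : {t, a} ∈ K.faces) (hdeg : K.deg {t, a} ≠ 3)
    (hadj : ∀ b, K.LinkVertex {t} b → a ≠ b → {t, a, b} ∈ K.faces) (p : Finset ℕ) :
    t ∉ p → a ∉ p → insert t p ∈ K.faces → insert a p ∈ K.faces →
      insert t (insert a p) ∈ K.faces := by
  induction p using Finset.strongInduction with
  | _ p ih =>
  intro htp hap htp' hap'
  have of_erase {x} (hx : x ∈ p) : insert t (insert a (p.erase x)) ∈ K.faces :=
    ih _ (Finset.erase_ssubset hx) (by simp [htp]) (by simp [hap])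
      (mem_of_subset htp' (Finset.insert_subset_insert t (p.erase_subset x)) (by simp))
      (mem_of_subset hap' (Finset.insert_subset_insert a (p.erase_subset x)) (by simp))
  have hcard := hK.isNormal.card_le _ htp'
  rw [Finset.card_insert_of_notMem htp] at hcard
  obtain h | h | h | h : p.card = 0 ∨ p.card = 1 ∨ p.card = 2 ∨ p.card = 3 := by omega
  · rwa [Finset.card_eq_zero.1 h]
  · obtain ⟨b, rfl⟩ := Finset.card_eq_one.1 h
    rw [Finset.mem_singleton] at htp hap
    exact hadj b (linkVertex_singleton.2 ⟨htp, htp'⟩) hap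
  · refine hK.mem_of_erase_mem ?_ fun x hx => ?_
    · rw [Finset.card_insert_of_notMem (by simp [hta, htp]), Finset.card_insert_of_notMem hap, h]
    · rcases Finset.mem_insert.1 hx with rfl | hx
      · rwa [Finset.erase_insert (by simp [hta, htp])]
      rcases Finset.mem_insert.1 hx with rfl | hx
      · rwa [Finset.erase_insert_of_ne hta, Finset.erase_insert hap]
      · convert of_erase hx using 1
        grind
  · have hlk := (hK.isNormal_lk_pair hta hmem).faces_eq_properFaces (s := p) one_pos h
      fun x hx => (insert_insert_mem_iff_mem_lk (Finset.card_pos.1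
        (by rw [Finset.card_erase_of_mem hx]; omega)) (by simp [htp]) (by simp [hap])).1
        (of_erase hx)
    refine absurd ?_ hdeg
    rw [deg_eq_card_linkVertices, ← h]
    congr 1
    ext y
    rw [mem_linkVertices, linkVertex_pair_iff_mem (by omega) hlk]

/-- If `a` were adjacent in the link of `t` to every other vertex of that link, the edge `ta`
could be contracted. -/
theorem exists_notMem_lk (hK : K.IsReduced) (ht : K.IsSingular t) (ha : {a} ∈ (K.lk {t}).faces) :
    ∃ b, {b} ∈ (K.lk {t}).faces ∧ a ≠ b ∧ {a, b} ∉ (K.lk {t}).faces := by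
  obtain ⟨hta, hmem⟩ := linkVertex_singleton.1 (singleton_mem_lk.1 ha)
  have hdeg := hK.four_le_deg_pair ht hta hmem
  by_contra! hadj
  obtain ⟨w, hw⟩ := K.vertexSet.exists_notMem
  refine hK.not_isContractible hdeg ⟨hta, hmem,
    hK.insert_insert_mem_of_forall_adj hta hmem (by omega) fun b hb hab => ?_, hw⟩
  have hmem := (mem_lk.1 (hadj b (singleton_mem_lk.2 hb) hab)).2.2
  rwa [Finset.union_comm, Finset.singleton_union] at hmem

end IsReduced

end Reduced

theorem statement9_general {K : SComplex} {t : ℕ} (hK : K.IsReduced) (ht : K.IsSingular t) :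
    8 ≤ K.deg {t} := by
  by_contra! hdeg
  have hL : (K.lk {t}).IsNormal 2 := hK.isNormal.lk ht.1 (by simp)
  refine ht.2 (hL.nonempty_homeomorph_sphere_of_fnum_zero_le_seven (fun a ha => ?_)
    (fun a ha => hK.exists_notMem_lk ht ha) (Nat.le_of_lt_succ hdeg))
  obtain ⟨hta, hmem⟩ := linkVertex_singleton.1 (singleton_mem_lk.1 ha)
  rw [deg_lk (by simpa using hta.symm), Finset.union_comm]
  exact hK.four_le_deg_pair ht hta hmem

/-- Lemma 3.10: in the class `R` with exactly two singular vertices `t, t₁`: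
if `d(t) = 7` then `tt₁` is an edge with `d(tt₁) = 6` and `d(t₁) ≥ 8`;
otherwise `d(t) ≥ 8` and `d(t₁) ≥ 8`. -/
theorem statement9 (K : SComplex) (t t₁ : ℕ) (hK : InClassR K) (hne : t ≠ t₁)
    (hsing : {v | K.IsSingular v} = {t, t₁}) :
    (K.deg {t} = 7 →
      ({t, t₁} : Finset ℕ) ∈ K.faces ∧ K.deg {t, t₁} = 6 ∧ 8 ≤ K.deg {t₁}) ∧
    (K.deg {t} ≠ 7 → 8 ≤ K.deg {t} ∧ 8 ≤ K.deg {t₁}) := by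
  have ht : 8 ≤ K.deg {t} := statement9_general hK.isReduced (hsing.ge (by simp))
  have ht₁ : 8 ≤ K.deg {t₁} := statement9_general hK.isReduced (hsing.ge (by simp))
  exact ⟨fun h => by omega, fun _ => ⟨ht, ht₁⟩⟩


end SComplex
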